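/- Let ω be a radial weight on 𝔻 and 0<p,q<∞ with ∫₀¹ ω̂(t)(1−t)^{q−2} dt < ∞. Write A(f)=∫_𝔻 |f(z)|^p (1−|z|)^{q−2} ω̂(z) dA(z) and B(f)=∫_𝔻 |f(z)|^p (1−|z|)^{q−1} ω(z) dA(z). Then: (i) if 0<q<1, there exists C≥1 with (1/C)B(f) ≤ A(f) ≤ C·B(f) for all analytic f on 𝔻 if and only if the radial weight z ↦ ω̂(z)(1−|z|)^{q−2} belongs to D̂; (ii) if q=1, such a two-sided comparison holds if and only if z ↦ ω̂(z)(1−|z|)^{−1} belongs to 𝒟; (iii) if 1<q<∞, it holds if and only if ω belongs to 𝒟. -/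

import Mathlib

open MeasureTheory Real Set Metric

noncomputable section

/-- The tail integral `ω̂(r) = ∫_r^1 ω(t) dt` of a radial weight, as a function of the radius. -/
def tailInt (ω : ℝ → ℝ) (r : ℝ) : ℝ := ∫ t in Ioo r 1, ω t

/-- A radial weight on the unit disc, identified with its profile on `[0,1)`:
nonnegative, measurable, integrable on `(0,1)`, with strictly positive tail integrals. -/
def IsRadialWeight (ω : ℝ → ℝ) : Prop :=
  Measurable ω ∧ (∀ r, 0 ≤ ω r) ∧ IntegrableOn ω (Ioo (0:ℝ) 1) ∧
    ∀ r ∈ Ico (0:ℝ) 1, 0 < tailInt ω r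

/-- The class `D̂` of radial weights whose tail integral satisfies a doubling condition. -/
def Dhat (ω : ℝ → ℝ) : Prop :=
  ∃ C : ℝ, 1 < C ∧ ∀ r ∈ Ico (0:ℝ) 1, tailInt ω r ≤ C * tailInt ω ((1 + r) / 2)

/-- The class `Ď` of radial weights. -/
def Dcheck (ω : ℝ → ℝ) : Prop :=
  ∃ K : ℝ, 1 < K ∧ ∃ C : ℝ, 1 < C ∧ ∀ r ∈ Ico (0:ℝ) 1,
    C * tailInt ω (1 - (1 - r) / K) ≤ tailInt ω r

/-- The class `𝒟 = D̂ ∩ Ď`. -/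
def Dclass (ω : ℝ → ℝ) : Prop := Dhat ω ∧ Dcheck ω

/-- The moment `ω_x = ∫_0^1 r^x ω(r) dr` of a radial weight. -/
def momentW (ω : ℝ → ℝ) (x : ℝ) : ℝ := ∫ r in Ioo (0:ℝ) 1, r ^ x * ω r

/-- The class `ℳ` of radial weights. -/
def Mclass (ω : ℝ → ℝ) : Prop :=
  ∃ K : ℝ, 1 < K ∧ ∃ C : ℝ, 1 < C ∧ ∀ x : ℝ, 1 ≤ x → C * momentW ω (K * x) ≤ momentW ω x

/-- The maximum modulus `M_∞(r,f)` on the circle of radius `r`. -/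
def Minf (f : ℂ → ℂ) (r : ℝ) : ℝ :=
  sSup ((fun z => ‖f z‖) '' sphere (0:ℂ) r)

/-- The integral mean `M_q(r,f)` for `0 < q < ∞`. -/
def Mq (q : ℝ) (f : ℂ → ℂ) (r : ℝ) : ℝ :=
  ((2 * π)⁻¹ * ∫ θ in (0:ℝ)..(2 * π),
      ‖f ((r : ℂ) * Complex.exp ((θ : ℂ) * Complex.I))‖ ^ q) ^ q⁻¹

/-- `J^p_ω(f) = ∫_0^1 M_∞(r,f)^p ω(r) dr`. -/
def Jp (p : ℝ) (ω : ℝ → ℝ) (f : ℂ → ℂ) : ℝ :=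
  ∫ r in Ioo (0:ℝ) 1, Minf f r ^ p * ω r

/-- `‖f‖_{H^p_ω}^p = ∫_𝔻 p²|f|^{p-2}|f'|² ω̂(|z|) dA(z)`, integrand `0` where `f' = 0`. -/
def HpNormP (p : ℝ) (ω : ℝ → ℝ) (f : ℂ → ℂ) : ℝ :=
  ∫ z in ball (0:ℂ) 1,
    if deriv f z = 0 then 0
    else p ^ 2 * ‖f z‖ ^ (p - 2) * ‖deriv f z‖ ^ 2
        * tailInt ω (‖z‖)

/-- `‖f‖_{S^p_ω}^p = ∫_0^1 (∫_{D(0,r)} |f'|² dA)^{p/2} ω(r) dr`. -/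
def SpNormP (p : ℝ) (ω : ℝ → ℝ) (f : ℂ → ℂ) : ℝ :=
  ∫ r in Ioo (0:ℝ) 1,
    (∫ z in ball (0:ℂ) r, ‖deriv f z‖ ^ 2) ^ (p / 2) * ω r

/-- The `k`-th Maclaurin coefficient `f̂(k) = f^{(k)}(0)/k!`. -/
def coefF (f : ℂ → ℂ) (k : ℕ) : ℂ := iteratedDeriv k f 0 / (k.factorial : ℂ)

/-- Weighted Bergman-type integral `∫_𝔻 |f(z)|^p (1-|z|)^x w(|z|) dA(z)`. -/
def Apq (p x : ℝ) (w : ℝ → ℝ) (f : ℂ → ℂ) : ℝ :=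
  ∫ z in ball (0:ℂ) 1,
    ‖f z‖ ^ p * (1 - ‖z‖) ^ x * w (‖z‖)

/-- Weighted Dirichlet-type integral `∫_𝔻 |f'(z)|^p (1-|z|)^x w(|z|) dA(z)`. -/
def DirInt (p x : ℝ) (w : ℝ → ℝ) (f : ℂ → ℂ) : ℝ :=
  ∫ z in ball (0:ℂ) 1,
    ‖deriv f z‖ ^ p * (1 - ‖z‖) ^ x * w (‖z‖)

/-- The class `𝒮` of normalized univalent functions on the unit disc. -/
def InSclass (f : ℂ → ℂ) : Prop :=
  DifferentiableOn ℂ f (ball (0:ℂ) 1) ∧ InjOn f (ball (0:ℂ) 1) ∧ f 0 = 0 ∧ deriv f 0 = 1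

/-!
Put `x = q - 1`, `V = (1 - t)^x ω` and `W = (1 - t)^(x - 1) ω̂`. Circular means of `|f|^p` increase
with the radius because `|f|^p` is subharmonic, so by the layer-cake formula `V̂ ≍ Ŵ` makes the two
Bergman integrals comparable. Conversely, monomials `z ^ n` turn comparability into a comparison of
the moments of `V` and `W` of orders `pn + 1`. Integration by parts gives
`V̂ + x Ŵ = (1 - s)^x ω̂`, so the comparison of moments says that, against `t^y` with `y = pn`, the
mean of `1 - t` is `O(1/y)`; a Markov-type estimate then concentrates the moments near `t = 1` and
recovers `V̂ ≍ Ŵ`.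

By the same identity, for `x < 0` the comparison of tails reduces to `(1 - s)^x ω̂ ≲ Ŵ`, that is to
the doubling of `Ŵ`; for `x > 0` it means that `(1 - s)^x ω̂` is dominated both by `Ŵ` (doubling of
`ω̂`) and by `V̂` (`ω ∈ Ď`); for `x = 0` one has `V̂ = ω̂`,
where `ω̂ ≲ Ŵ` is doubling of `Ŵ` and `Ŵ ≲ ω̂` is `W ∈ Ď`.
-/

section Subharmonic

/-- The sub-mean value property on all circles whose closed disc lies in `U`; together with
continuity it is the form of subharmonicity used here. -/
def SubMeanOn (u : ℂ → ℝ) (U : Set ℂ) : Prop :=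
  ∀ c R, 0 < R → closedBall c R ⊆ U → u c ≤ circleAverage u c R

theorem log_norm_le_circleAverage {f : ℂ → ℂ} {c : ℂ} {R : ℝ} (hR : 0 < R)
    (hf : AnalyticOnNhd ℂ f (closedBall c R)) (hfc : f c ≠ 0) :
    log ‖f c‖ ≤ circleAverage (fun z => log ‖f z‖) c R := by
  rw [← abs_of_pos hR] at hf
  have divisor_nonneg : 0 ≤ ∑ᶠ u, (MeromorphicOn.divisor f (closedBall c |R|) u : ℝ) *
      log (R * ‖c - u‖⁻¹) := by
    refine finsum_nonneg fun u => ?_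
    by_cases hu : u ∈ closedBall c |R|
    · refine mul_nonneg (mod_cast MeromorphicOn.AnalyticOnNhd.divisor_nonneg hf u) ?_
      rcases eq_or_ne c u with rfl | hcu
      · simp
      · rw [abs_of_pos hR, mem_closedBall', dist_eq_norm] at hu
        rw [← div_eq_mul_inv]
        exact log_nonneg <| (one_le_div (norm_pos_iff.2 (sub_ne_zero.2 hcu))).2 hu
    · simp [Function.locallyFinsuppWithin.apply_eq_zero_of_notMem _ hu]
  rw [hf.circleAverage_log_norm hR.ne' hfc]
  linarith

/-- The normalisation `‖f c‖ = e^{1/p}` makes `e * (p log |f|) ≤ |f|^p` an equality at `c`. -/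
theorem norm_rpow_le_circleAverage_of_log_norm_eq {f : ℂ → ℂ} {c : ℂ} {R p : ℝ} (hR : 0 < R)
    (hp : 0 < p) (hf : AnalyticOnNhd ℂ f (closedBall c R)) (hfc : ‖f c‖ = exp (1 / p)) :
    ‖f c‖ ^ p ≤ circleAverage (fun z => ‖f z‖ ^ p) c R := by
  have log_le_rpow (z : ℂ) : (exp 1 * p) • log ‖f z‖ ≤ ‖f z‖ ^ p := by
    rcases eq_or_ne (f z) 0 with hz | hz
    · simp [hz, zero_rpow hp.ne']
    · rw [rpow_def_of_pos (norm_pos_iff.2 hz), smul_eq_mul, mul_assoc, mul_comm p]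
      exact exp_one_mul_le_exp
  have log_integrable : CircleIntegrable (fun z => (exp 1 * p) • log ‖f z‖) c R := by
    rw [← abs_of_pos hR] at hf
    exact (hf.mono sphere_subset_closedBall).meromorphicOn.circleIntegrable_log_norm.const_fun_smul
  have rpow_integrable : CircleIntegrable (fun z => ‖f z‖ ^ p) c R :=
    ((hf.continuousOn.mono sphere_subset_closedBall).norm.rpow_const
      fun _ _ => Or.inr hp.le).circleIntegrable hR.le
  calc ‖f c‖ ^ p = (exp 1 * p) • log ‖f c‖ := by
        rw [hfc, log_exp, ← exp_mul, one_div, inv_mul_cancel₀ hp.ne', smul_eq_mul, mul_assoc,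
          mul_inv_cancel₀ hp.ne', mul_one]
    _ ≤ (exp 1 * p) • circleAverage (fun z => log ‖f z‖) c R := by
        refine smul_le_smul_of_nonneg_left (log_norm_le_circleAverage hR hf ?_) (by positivity)
        exact norm_pos_iff.1 (hfc ▸ exp_pos _)
    _ = circleAverage (fun z => (exp 1 * p) • log ‖f z‖) c R := circleAverage_fun_smul.symm
    _ ≤ circleAverage (fun z => ‖f z‖ ^ p) c R :=
        circleAverage_mono log_integrable rpow_integrable fun z _ => log_le_rpow z

theorem norm_rpow_le_circleAverage {f : ℂ → ℂ} {c : ℂ} {R p : ℝ} (hR : 0 < R) (hp : 0 < p)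
    (hf : AnalyticOnNhd ℂ f (closedBall c R)) :
    ‖f c‖ ^ p ≤ circleAverage (fun z => ‖f z‖ ^ p) c R := by
  rcases eq_or_ne (f c) 0 with hfc | hfc
  · rw [hfc, norm_zero, zero_rpow hp.ne']
    exact circleAverage_nonneg_of_nonneg fun z _ => by positivity
  have hfc_pos : 0 < ‖f c‖ := norm_pos_iff.2 hfc
  set k : ℝ := exp (1 / p) / ‖f c‖
  have hk : 0 < k := by positivity
  have norm_k_mul (z : ℂ) : ‖(k : ℂ) * f z‖ = k * ‖f z‖ := by
    rw [norm_mul, Complex.norm_real, norm_of_nonneg hk.le]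
  have normalised := norm_rpow_le_circleAverage_of_log_norm_eq hR hp (analyticOnNhd_const.mul hf)
    (show ‖(k : ℂ) * f c‖ = exp (1 / p) by rw [norm_k_mul, div_mul_cancel₀ _ hfc_pos.ne'])
  simp only [norm_k_mul, mul_rpow hk.le (norm_nonneg _), ← smul_eq_mul (k ^ p),
    circleAverage_fun_smul] at normalised
  exact le_of_smul_le_smul_left normalised (by positivity)

theorem subMeanOn_norm_rpow {f : ℂ → ℂ} {U : Set ℂ} {p : ℝ} (hp : 0 < p)
    (hf : AnalyticOnNhd ℂ f U) : SubMeanOn (fun z => ‖f z‖ ^ p) U :=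
  fun _ _ hR hU => norm_rpow_le_circleAverage hR hp (hf.mono hU)

theorem circleAverage_lt_of_exists_lt {v : ℂ → ℝ} {c : ℂ} {R M : ℝ} (hR : 0 ≤ R)
    (hv : ContinuousOn v (sphere c R)) (hle : ∀ z ∈ sphere c R, v z ≤ M)
    (hlt : ∃ z ∈ sphere c R, v z < M) : circleAverage v c R < M := by
  have hmem (θ : ℝ) : circleMap c R θ ∈ sphere c R := circleMap_mem_sphere c hR θ
  obtain ⟨z, hz, hzM⟩ := hlt
  rw [← abs_of_nonneg hR, ← image_circleMap_Ioc] at hz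
  obtain ⟨θ, hθ, rfl⟩ := hz
  have integral_lt : ∫ θ in (0 : ℝ)..2 * π, v (circleMap c R θ) < ∫ _ in (0 : ℝ)..2 * π, M :=
    intervalIntegral.integral_lt_integral_of_continuousOn_of_le_of_exists_lt two_pi_pos
      (hv.comp_continuous (continuous_circleMap c R) hmem).continuousOn continuousOn_const
      (fun θ _ => hle _ (hmem θ)) ⟨θ, Ioc_subset_Icc_self hθ, hzM⟩
  rwa [intervalIntegral.integral_const, smul_eq_mul, sub_zero, ← inv_mul_lt_iff₀ two_pi_pos]
    at integral_lt

theorem SubMeanOn.exists_mem_sphere_isMaxOn {v : ℂ → ℝ} {R : ℝ} (hR : 0 ≤ R)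
    (hv : ContinuousOn v (closedBall 0 R)) (hsub : SubMeanOn v (closedBall 0 R)) :
    ∃ z ∈ sphere (0 : ℂ) R, IsMaxOn v (closedBall 0 R) z := by
  have hK : IsCompact (closedBall (0 : ℂ) R) := isCompact_closedBall _ _
  obtain ⟨m, hm, hmax⟩ := hK.exists_isMaxOn (nonempty_closedBall.2 hR) hv
  have hS : IsCompact (closedBall (0 : ℂ) R ∩ v ⁻¹' {v m}) := hK.of_isClosed_subset
    (hv.preimage_isClosed_of_isClosed isClosed_closedBall isClosed_singleton) inter_subset_left
  obtain ⟨z, ⟨hz, hzm : v z = v m⟩, hfar⟩ := hS.exists_isMaxOn ⟨m, hm, rfl⟩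
    continuous_norm.continuousOn
  have hle (w : ℂ) (hw : w ∈ closedBall 0 R) : v w ≤ v z := hzm ▸ hmax hw
  refine ⟨z, ?_, hle⟩
  by_contra hz_sphere
  rw [mem_closedBall_zero_iff] at hz
  rw [mem_sphere_zero_iff_norm] at hz_sphere
  have hρ : 0 < R - ‖z‖ := sub_pos.2 (lt_of_le_of_ne hz hz_sphere)
  have hball : closedBall z (R - ‖z‖) ⊆ closedBall 0 R := closedBall_subset_closedBall' (by simp)
  -- The circle about `z` touches `sphere 0 R` at the point in the direction of `z`.
  set w := circleMap z (R - ‖z‖) z.arg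
  have hw_norm : ‖w‖ = R := by
    have : w = R * Complex.exp (z.arg * Complex.I) := by
      simp only [w, circleMap, Complex.ofReal_sub]
      linear_combination -Complex.norm_mul_exp_arg_mul_I z
    rw [this, norm_mul, Complex.norm_exp_ofReal_mul_I, mul_one, Complex.norm_real,
      norm_of_nonneg hR]
  have hw : w ∈ closedBall (0 : ℂ) R := by rw [mem_closedBall_zero_iff, hw_norm]
  have hvw : v w < v z := lt_of_le_of_ne (hle w hw) fun h => by
    have : ‖w‖ ≤ ‖z‖ := hfar ⟨hw, h.trans hzm⟩
    linarith
  refine (hsub z _ hρ hball).not_gt (circleAverage_lt_of_exists_lt hρ.le ?_ ?_ ?_)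
  · exact hv.mono (sphere_subset_closedBall.trans hball)
  · exact fun y hy => hle y (hball (sphere_subset_closedBall hy))
  · exact ⟨w, circleMap_mem_sphere z hρ.le _, hvw⟩

theorem circleAverage_zero_norm_eq (u : ℂ → ℝ) (w : ℂ) :
    circleAverage u 0 ‖w‖ = (2 * π)⁻¹ • ∫ φ in (0 : ℝ)..2 * π, u (circleMap 0 1 φ * w) := by
  rw [circleAverage_eq_integral_add w.arg]
  congr 2 with φ
  conv_rhs => rw [← Complex.norm_mul_exp_arg_mul_I w]
  simp only [circleMap, zero_add, Complex.ofReal_add, add_mul, Complex.exp_add, Complex.ofReal_one]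
  ring_nf

theorem circleAverage_comp_mul_left (u : ℂ → ℝ) (c : ℂ) (R φ : ℝ) :
    circleAverage (fun z => u (circleMap 0 1 φ * z)) c R =
      circleAverage u (circleMap 0 1 φ * c) R := by
  rw [circleAverage_eq_integral_add φ (f := u), circleAverage_def]
  congr 2 with θ
  simp only [circleMap, zero_add, Complex.ofReal_add, add_mul, Complex.exp_add, Complex.ofReal_one]
  ring_nf

variable {u : ℂ → ℝ} {R : ℝ}

theorem mul_circleMap_mem_closedBall {w : ℂ} (hw : w ∈ closedBall (0 : ℂ) R) (φ : ℝ) :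
    circleMap 0 1 φ * w ∈ closedBall (0 : ℂ) R := by
  simpa using hw

theorem continuousOn_circleAverage_norm (hu : ContinuousOn u (closedBall 0 R)) :
    ContinuousOn (fun w : ℂ => circleAverage u 0 ‖w‖) (closedBall 0 R) := by
  have h : ContinuousOn (circleAverage u 0) (Icc 0 R) :=
    ContinuousOn.circleAverage (hu.mono fun z hz => by simpa using hz.2) fun r hr => hr.1
  exact h.comp continuous_norm.continuousOn fun w hw => ⟨norm_nonneg w, by simpa using hw⟩

theorem SubMeanOn.comp_circleMap_mul (hsub : SubMeanOn u (closedBall 0 R)) (φ : ℝ) :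
    SubMeanOn (fun z => u (circleMap 0 1 φ * z)) (closedBall 0 R) := by
  intro c ρ hρ hball
  have hne : circleMap 0 1 φ ≠ 0 := circleMap_ne_center one_ne_zero
  rw [circleAverage_comp_mul_left]
  refine hsub _ ρ hρ fun z hz => ?_
  have hrot : (circleMap 0 1 φ)⁻¹ * z ∈ closedBall c ρ := by
    rw [mem_closedBall_iff_norm] at hz ⊢
    have : (circleMap 0 1 φ)⁻¹ * z - c = (circleMap 0 1 φ)⁻¹ * (z - circleMap 0 1 φ * c) := by
      field_simp
    simpa [this] using hz
  simpa using hball hrot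

theorem SubMeanOn.circleAverage_norm (hu : ContinuousOn u (closedBall 0 R))
    (hsub : SubMeanOn u (closedBall 0 R)) :
    SubMeanOn (fun w => circleAverage u 0 ‖w‖) (closedBall 0 R) := by
  intro c ρ hρ hball
  set F : ℝ → ℝ → ℝ := fun φ θ => u (circleMap 0 1 φ * circleMap c ρ θ)
  have hF : Continuous (Function.uncurry F) :=
    hu.comp_continuous (by fun_prop) fun x =>
      mul_circleMap_mem_closedBall (hball (circleMap_mem_closedBall c hρ.le _)) _
  have hcenter : Continuous fun φ => u (circleMap 0 1 φ * c) :=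
    hu.comp_continuous (by fun_prop) fun φ =>
      mul_circleMap_mem_closedBall (hball (mem_closedBall_self hρ.le)) φ
  have hmean : Continuous fun φ => (2 * π)⁻¹ • ∫ θ in (0 : ℝ)..2 * π, F φ θ :=
    (intervalIntegral.continuous_parametric_intervalIntegral_of_continuous' hF _ _).fun_const_smul _
  calc circleAverage u 0 ‖c‖ = (2 * π)⁻¹ • ∫ φ in (0 : ℝ)..2 * π, u (circleMap 0 1 φ * c) :=
        circleAverage_zero_norm_eq u c
    _ ≤ (2 * π)⁻¹ • ∫ φ in (0 : ℝ)..2 * π, (2 * π)⁻¹ • ∫ θ in (0 : ℝ)..2 * π, F φ θ := by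
        refine smul_le_smul_of_nonneg_left ?_ (by positivity)
        refine intervalIntegral.integral_mono_on two_pi_pos.le (hcenter.intervalIntegrable _ _)
          (hmean.intervalIntegrable _ _) fun φ _ => hsub.comp_circleMap_mul φ c ρ hρ hball
    _ = (2 * π)⁻¹ • ∫ θ in (0 : ℝ)..2 * π, (2 * π)⁻¹ • ∫ φ in (0 : ℝ)..2 * π, F φ θ := by
        rw [intervalIntegral.integral_smul, intervalIntegral.integral_smul,
          intervalIntegral_intervalIntegral_swap]
        have : IntegrableOn (Function.uncurry F) (uIcc 0 (2 * π) ×ˢ uIcc 0 (2 * π)) :=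
          hF.continuousOn.integrableOn_compact (isCompact_uIcc.prod isCompact_uIcc)
        exact this.mono_set (prod_mono uIoc_subset_uIcc uIoc_subset_uIcc)
    _ = circleAverage (fun w => circleAverage u 0 ‖w‖) c ρ := by
        simp only [circleAverage_zero_norm_eq]
        rfl

theorem SubMeanOn.circleAverage_mono (hu : ContinuousOn u (closedBall 0 R))
    (hsub : SubMeanOn u (closedBall 0 R)) {r : ℝ} (hr : 0 ≤ r) (hrR : r ≤ R) :
    circleAverage u 0 r ≤ circleAverage u 0 R := by
  obtain ⟨z, hz, hmax⟩ := SubMeanOn.exists_mem_sphere_isMaxOn (hr.trans hrR)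
    (continuousOn_circleAverage_norm hu) (hsub.circleAverage_norm hu)
  have hrz : circleAverage u 0 ‖(r : ℂ)‖ ≤ circleAverage u 0 ‖z‖ :=
    hmax (by simpa [abs_of_nonneg hr] using hrR)
  rwa [mem_sphere_zero_iff_norm.1 hz, Complex.norm_real, norm_of_nonneg hr] at hrz

theorem monotoneOn_circleAverage_norm_rpow {f : ℂ → ℂ} {p : ℝ} (hp : 0 < p)
    (hf : DifferentiableOn ℂ f (ball 0 R)) :
    MonotoneOn (circleAverage (fun z => ‖f z‖ ^ p) 0) (Ico 0 R) := by
  intro r hr s hs hrs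
  have hball : closedBall (0 : ℂ) s ⊆ ball 0 R := closedBall_subset_ball hs.2
  exact SubMeanOn.circleAverage_mono
    ((hf.continuousOn.mono hball).norm.rpow_const fun _ _ => Or.inr hp.le)
    (subMeanOn_norm_rpow hp ((hf.analyticOnNhd isOpen_ball).mono hball)) hr.1 hrs

end Subharmonic

section Polar

open scoped ENNReal

variable {R : ℝ}

theorem lintegral_ball_eq_lintegral_polar {F : ℂ → ℝ≥0∞}
    (hF : Measurable ((ball 0 R).indicator F)) :
    ∫⁻ z in ball 0 R, F z =
      ∫⁻ r in Ioo 0 R, ENNReal.ofReal r * ∫⁻ θ in Ioo (-π) π, F (circleMap 0 r θ) := by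
  have hpolar (r θ : ℝ) : Complex.polarCoord.symm (r, θ) = circleMap 0 r θ := by
    rw [Complex.polarCoord_symm_apply, circleMap_zero, Complex.exp_mul_I,
      Complex.ofReal_cos, Complex.ofReal_sin]
  have hmeas : Measurable fun x : ℝ × ℝ =>
      ENNReal.ofReal x.1 * (ball 0 R).indicator F (circleMap 0 x.1 x.2) :=
    (by fun_prop : Measurable fun x : ℝ × ℝ => ENNReal.ofReal x.1).mul
      (hF.comp circleMap.continuous.measurable)
  rw [← lintegral_indicator measurableSet_ball, ← Complex.lintegral_comp_polarCoord_symm,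
    polarCoord_target, Measure.volume_eq_prod, ← Measure.prod_restrict]
  simp only [smul_eq_mul, hpolar]
  rw [lintegral_prod _ hmeas.aemeasurable,
    ← inter_eq_left.2 (Ioo_subset_Ioi_self : Ioo 0 R ⊆ Ioi 0),
    ← setLIntegral_indicator measurableSet_Ioo]
  refine setLIntegral_congr_fun measurableSet_Ioi fun r (hr : 0 < r) => ?_
  have hmem (θ : ℝ) : circleMap 0 r θ ∈ ball (0 : ℂ) R ↔ r < R := by simp [abs_of_pos hr]
  by_cases hrR : r < R
  · simp only [indicator_of_mem ((hmem _).2 hrR),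
      indicator_of_mem (show r ∈ Ioo 0 R from ⟨hr, hrR⟩)]
    exact lintegral_const_mul' _ _ ENNReal.ofReal_ne_top
  · simp only [indicator_of_notMem fun h => hrR ((hmem _).1 h),
      indicator_of_notMem fun h : r ∈ Ioo 0 R => hrR h.2, mul_zero, lintegral_zero]

theorem lintegral_ofReal_circleMap {u : ℂ → ℝ} {r : ℝ} (hr : 0 ≤ r)
    (hu : ContinuousOn u (sphere 0 r)) (hu0 : ∀ z ∈ sphere (0 : ℂ) r, 0 ≤ u z) :
    ∫⁻ θ in Ioo (-π) π, ENNReal.ofReal (u (circleMap 0 r θ)) =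
      ENNReal.ofReal (2 * π * circleAverage u 0 r) := by
  have hmem (θ : ℝ) : circleMap 0 r θ ∈ sphere (0 : ℂ) r := circleMap_mem_sphere 0 hr θ
  have hcont : Continuous fun θ => u (circleMap 0 r θ) :=
    hu.comp_continuous (continuous_circleMap 0 r) hmem
  have hper : Function.Periodic (fun θ => u (circleMap 0 r θ)) (2 * π) :=
    (periodic_circleMap 0 r).comp u
  have hshift := hper.intervalIntegral_add_eq (-π) 0
  rw [zero_add, show -π + 2 * π = π by ring] at hshift
  rw [circleAverage_def, smul_eq_mul, mul_inv_cancel_left₀ two_pi_pos.ne', ← hshift,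
    intervalIntegral.integral_of_le (by linarith [pi_pos]), integral_Ioc_eq_integral_Ioo,
    ofReal_integral_eq_lintegral_ofReal]
  · exact (hcont.integrableOn_Icc (a := -π) (b := π)).mono_set Ioo_subset_Icc_self
  · exact .of_forall fun θ => hu0 _ (hmem θ)

theorem continuousOn_circleAverage_Ico {u : ℂ → ℝ} (hu : ContinuousOn u (ball 0 R)) :
    ContinuousOn (circleAverage u 0) (Ico 0 R) :=
  ContinuousOn.circleAverage (hu.mono fun z hz => by simpa using hz.2) fun _ hr => hr.1

theorem integral_ball_mul_radial {u : ℂ → ℝ} {w : ℝ → ℝ} (hu : ContinuousOn u (ball 0 R))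
    (hu0 : ∀ z ∈ ball (0 : ℂ) R, 0 ≤ u z) (hw : Measurable w) (hw0 : ∀ r ∈ Ico 0 R, 0 ≤ w r) :
    ∫ z in ball 0 R, u z * w ‖z‖ =
      2 * π * ∫ r in Ioo 0 R, r * circleAverage u 0 r * w r := by
  have hmean0 (r : ℝ) (hr : r ∈ Ioo 0 R) : 0 ≤ circleAverage u 0 r :=
    circleAverage_nonneg_of_nonneg fun z hz => hu0 z (by
      rw [abs_of_pos hr.1] at hz
      exact sphere_subset_ball hr.2 hz)
  have hmeanm : AEStronglyMeasurable (circleAverage u 0) (volume.restrict (Ioo 0 R)) :=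
    ((continuousOn_circleAverage_Ico hu).mono Ioo_subset_Ico_self).aestronglyMeasurable
      measurableSet_Ioo
  have hF : Measurable ((ball 0 R).indicator fun z => ENNReal.ofReal (u z * w ‖z‖)) := by
    classical
    have hind : Measurable ((ball 0 R).indicator u) := by
      rw [← piecewise_eq_indicator]
      exact hu.measurable_piecewise continuousOn_const measurableSet_ball
    convert (hind.mul (hw.comp measurable_norm)).ennreal_ofReal using 2 with z
    by_cases hz : z ∈ ball (0 : ℂ) R <;> simp [indicator, hz]
  rw [← integral_const_mul, integral_eq_lintegral_of_nonneg_ae,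
    lintegral_ball_eq_lintegral_polar hF, integral_eq_lintegral_of_nonneg_ae]
  · congr 1
    refine setLIntegral_congr_fun measurableSet_Ioo fun r hr => ?_
    have hsphere : sphere (0 : ℂ) r ⊆ ball 0 R := sphere_subset_ball hr.2
    have hwr : 0 ≤ w r := hw0 r ⟨hr.1.le, hr.2⟩
    simp only [norm_circleMap_zero, abs_of_pos hr.1, ENNReal.ofReal_mul' hwr]
    rw [lintegral_mul_const' _ _ ENNReal.ofReal_ne_top,
      lintegral_ofReal_circleMap hr.1.le (hu.mono hsphere) fun z hz => hu0 z (hsphere hz),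
      ← ENNReal.ofReal_mul' hwr, ← ENNReal.ofReal_mul hr.1.le]
    congr 1
    ring
  · filter_upwards [ae_restrict_mem measurableSet_Ioo] with r hr
    have := hw0 r ⟨hr.1.le, hr.2⟩
    have := hmean0 r hr
    have := hr.1.le
    positivity
  · exact ((aestronglyMeasurable_id.mul hmeanm).mul hw.aestronglyMeasurable).const_mul _
  · filter_upwards [ae_restrict_mem measurableSet_ball] with z hz
    exact mul_nonneg (hu0 z hz) (hw0 _ ⟨norm_nonneg z, by simpa using hz⟩)
  · exact (hu.aestronglyMeasurable measurableSet_ball).mul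
      (hw.comp measurable_norm).aestronglyMeasurable

end Polar

section LayerCake

open scoped ENNReal

theorem lintegral_le_of_monotoneOn {μ ν : Measure ℝ} {a b : ℝ} {G : ℝ → ℝ} {C : ℝ≥0∞}
    (hC : C ≠ ∞) (hG : MonotoneOn G (Ioo a b)) (hG0 : ∀ r ∈ Ioo a b, 0 ≤ G r)
    (h : ∀ s ∈ Ico a b, μ (Ico s b) ≤ C * ν (Ioo s b)) :
    ∫⁻ r in Ioo a b, ENNReal.ofReal (G r) ∂μ ≤ C * ∫⁻ r in Ioo a b, ENNReal.ofReal (G r) ∂ν := by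
  have layer_cake (ξ : Measure ℝ) : ∫⁻ r in Ioo a b, ENNReal.ofReal (G r) ∂ξ =
      ∫⁻ t in Ioi 0, ξ ({r | t < G r} ∩ Ioo a b) := by
    rw [lintegral_eq_lintegral_meas_lt _ ((ae_restrict_mem measurableSet_Ioo).mono hG0)
      (aemeasurable_restrict_of_monotoneOn measurableSet_Ioo hG)]
    simp only [Measure.restrict_apply' measurableSet_Ioo]
  rw [layer_cake, layer_cake, ← lintegral_const_mul' _ _ hC]
  refine lintegral_mono fun t => ?_
  set S := {r | t < G r} ∩ Ioo a b
  rcases S.eq_empty_or_nonempty with hS | hS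
  · simp [hS]
  have hbdd : BddBelow S := ⟨a, fun r hr => hr.2.1.le⟩
  have hs : sInf S ∈ Ico a b :=
    ⟨le_csInf hS fun r hr => hr.2.1.le,
      hS.elim fun r hr => (csInf_le hbdd hr).trans_lt hr.2.2⟩
  have subset_S : Ioo (sInf S) b ⊆ S := fun r hr => by
    obtain ⟨r₀, hr₀, hlt⟩ := exists_lt_of_csInf_lt hS hr.1
    have hr' : r ∈ Ioo a b := ⟨hs.1.trans_lt hr.1, hr.2⟩
    exact ⟨lt_of_lt_of_le hr₀.1 (hG hr₀.2 hr' hlt.le), hr'⟩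
  calc μ S ≤ μ (Ico (sInf S) b) := measure_mono fun r hr => ⟨csInf_le hbdd hr, hr.2.2⟩
    _ ≤ C * ν (Ioo (sInf S) b) := h _ hs
    _ ≤ C * ν S := by gcongr

end LayerCake

section Weights

/-- A radial weight on the unit disc given by its profile, constrained only on `[0,1)`: the weight
`powWeight x w` below may be negative beyond radius `1`, which `IsRadialWeight` forbids. -/
structure DiscWeight (w : ℝ → ℝ) : Prop where
  measurable : Measurable w
  nonneg : ∀ r ∈ Ico (0 : ℝ) 1, 0 ≤ w r
  integrableOn : IntegrableOn w (Ioo 0 1)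
  tail_pos : ∀ r ∈ Ico (0 : ℝ) 1, 0 < tailInt w r

theorem IsRadialWeight.discWeight {w : ℝ → ℝ} (hw : IsRadialWeight w) : DiscWeight w where
  measurable := hw.1
  nonneg r _ := hw.2.1 r
  integrableOn := hw.2.2.1
  tail_pos := hw.2.2.2

/-- The radial weight `t ↦ w(t) (1-t)^x`, the full density in `Apq p x w`. -/
def powWeight (x : ℝ) (w : ℝ → ℝ) (t : ℝ) : ℝ := w t * (1 - t) ^ x

theorem tailInt_eq_intervalIntegral (w : ℝ → ℝ) {s : ℝ} (hs : s ≤ 1) :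
    tailInt w s = ∫ t in s..1, w t := by
  rw [intervalIntegral.integral_of_le hs, integral_Ioc_eq_integral_Ioo, tailInt]

theorem measurable_tailInt {w : ℝ → ℝ} (hw : Measurable w) (hw0 : ∀ r, 0 ≤ w r) :
    Measurable (tailInt w) := by
  have heq : tailInt w = fun s => (∫⁻ t in Ioo s 1, ENNReal.ofReal (w t)).toReal :=
    funext fun s => integral_eq_lintegral_of_nonneg_ae (.of_forall hw0) hw.aestronglyMeasurable
  have hanti : Antitone fun s : ℝ => ∫⁻ t in Ioo s 1, ENNReal.ofReal (w t) :=
    fun _ _ hab => lintegral_mono_set (Ioo_subset_Ioo_left hab)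
  exact heq ▸ hanti.measurable.ennreal_toReal

namespace DiscWeight

variable {w V W : ℝ → ℝ} (hw : DiscWeight w) (hV : DiscWeight V) (hW : DiscWeight W)
include hw

theorem integrableOn_Ioo {s : ℝ} (hs : 0 ≤ s) : IntegrableOn w (Ioo s 1) :=
  hw.integrableOn.mono_set (Ioo_subset_Ioo_left hs)

theorem ae_nonneg {s : ℝ} (hs : 0 ≤ s) : 0 ≤ᵐ[volume.restrict (Ioo s 1)] w :=
  (ae_restrict_mem measurableSet_Ioo).mono fun r hr => hw.nonneg r ⟨hs.trans hr.1.le, hr.2⟩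

theorem tailInt_nonneg {s : ℝ} (hs : 0 ≤ s) : 0 ≤ tailInt w s :=
  integral_nonneg_of_ae (hw.ae_nonneg hs)

theorem antitoneOn_tailInt : AntitoneOn (tailInt w) (Ici 0) := fun _ ha _ _ hab =>
  setIntegral_mono_set (hw.integrableOn_Ioo ha) (hw.ae_nonneg ha)
    (Ioo_subset_Ioo_left hab).eventuallyLE

theorem ofReal_tailInt {s : ℝ} (hs : 0 ≤ s) :
    ENNReal.ofReal (tailInt w s) = ∫⁻ t in Ioo s 1, ENNReal.ofReal (w t) :=
  ofReal_integral_eq_lintegral_ofReal (hw.integrableOn_Ioo hs) (hw.ae_nonneg hs)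

theorem setLIntegral_withDensity {G : ℝ → ℝ} (hG : MonotoneOn G (Ioo 0 1)) :
    ∫⁻ r in Ioo 0 1, ENNReal.ofReal (G r) ∂volume.withDensity (fun t => ENNReal.ofReal (w t)) =
      ∫⁻ r in Ioo 0 1, ENNReal.ofReal (G r * w r) := by
  have hGm := aemeasurable_restrict_of_monotoneOn (μ := volume) measurableSet_Ioo hG
  have hwm := hw.measurable.aemeasurable (μ := volume.restrict (Ioo 0 1))
  rw [restrict_withDensity measurableSet_Ioo,
    lintegral_withDensity_eq_lintegral_mul₀ hwm.ennreal_ofReal hGm.ennreal_ofReal]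
  refine setLIntegral_congr_fun measurableSet_Ioo fun r hr => ?_
  rw [Pi.mul_apply, ENNReal.ofReal_mul' (hw.nonneg r ⟨hr.1.le, hr.2⟩), mul_comm]

omit hw
include hV hW

/-- Layer cake: the superlevel sets of `G` are the tails `(s, 1)`. -/
theorem integral_mul_le_of_tailInt_le {G : ℝ → ℝ} (hG : MonotoneOn G (Ioo 0 1))
    (hG0 : ∀ r ∈ Ioo 0 1, 0 ≤ G r) {C : ℝ} (hC : 0 ≤ C)
    (hVW : ∀ s ∈ Ico 0 1, tailInt V s ≤ C * tailInt W s)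
    (hGW : IntegrableOn (fun r => G r * W r) (Ioo 0 1)) :
    IntegrableOn (fun r => G r * V r) (Ioo 0 1) ∧
      ∫ r in Ioo 0 1, G r * V r ≤ C * ∫ r in Ioo 0 1, G r * W r := by
  have mul_nonneg_ae {U : ℝ → ℝ} (hU : DiscWeight U) :
      0 ≤ᵐ[volume.restrict (Ioo 0 1)] fun r => G r * U r :=
    (ae_restrict_mem measurableSet_Ioo).mono fun r hr =>
      mul_nonneg (hG0 r hr) (hU.nonneg r ⟨hr.1.le, hr.2⟩)
  have hmeas : AEStronglyMeasurable (fun r => G r * V r) (volume.restrict (Ioo 0 1)) :=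
    ((aemeasurable_restrict_of_monotoneOn measurableSet_Ioo hG).mul
      hV.measurable.aemeasurable).aestronglyMeasurable
  have hle : ∫⁻ r in Ioo 0 1, ENNReal.ofReal (G r * V r) ≤
      ENNReal.ofReal C * ENNReal.ofReal (∫ r in Ioo 0 1, G r * W r) := by
    rw [ofReal_integral_eq_lintegral_ofReal hGW (mul_nonneg_ae hW),
      ← hV.setLIntegral_withDensity hG, ← hW.setLIntegral_withDensity hG]
    refine lintegral_le_of_monotoneOn ENNReal.ofReal_ne_top hG hG0 fun s hs => ?_
    rw [withDensity_apply _ measurableSet_Ico, withDensity_apply _ measurableSet_Ioo,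
      Measure.restrict_congr_set Ioo_ae_eq_Ico.symm, ← hV.ofReal_tailInt hs.1,
      ← hW.ofReal_tailInt hs.1, ← ENNReal.ofReal_mul hC]
    exact ENNReal.ofReal_le_ofReal (hVW s hs)
  rw [← ENNReal.ofReal_mul hC] at hle
  have hGV : IntegrableOn (fun r => G r * V r) (Ioo 0 1) :=
    ⟨hmeas, (hasFiniteIntegral_iff_ofReal (mul_nonneg_ae hV)).2
      (hle.trans_lt ENNReal.ofReal_lt_top)⟩
  rw [← ofReal_integral_eq_lintegral_ofReal hGV (mul_nonneg_ae hV)] at hle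
  exact ⟨hGV, (ENNReal.ofReal_le_ofReal_iff
    (mul_nonneg hC (integral_nonneg_of_ae (mul_nonneg_ae hW)))).1 hle⟩

end DiscWeight

end Weights

section Comparison

open Asymptotics Filter

theorem isBigO_principal_iff_of_nonneg {α : Type*} {F G : α → ℝ} {S : Set α}
    (hF : ∀ s ∈ S, 0 ≤ F s) (hG : ∀ s ∈ S, 0 ≤ G s) :
    F =O[𝓟 S] G ↔ ∃ C, 0 < C ∧ ∀ s ∈ S, F s ≤ C * G s := by
  have hnorm (C : ℝ) : (∀ s ∈ S, ‖F s‖ ≤ C * ‖G s‖) ↔ ∀ s ∈ S, F s ≤ C * G s :=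
    forall₂_congr fun s hs => by rw [norm_of_nonneg (hF s hs), norm_of_nonneg (hG s hs)]
  simp only [isBigO_iff', eventually_principal, hnorm, gt_iff_lt]

variable {p x : ℝ} {w : ℝ → ℝ} {f : ℂ → ℂ}

theorem Apq_eq_integral_circleAverage (hp : 0 < p) (hw : DiscWeight (powWeight x w))
    (hf : DifferentiableOn ℂ f (ball 0 1)) :
    Apq p x w f = 2 * π * ∫ r in Ioo (0 : ℝ) 1,
      r * circleAverage (fun z => ‖f z‖ ^ p) 0 r * powWeight x w r := by
  rw [← integral_ball_mul_radial (hf.continuousOn.norm.rpow_const fun _ _ => Or.inr hp.le)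
    (fun _ _ => by positivity) hw.measurable hw.nonneg]
  simp only [Apq, powWeight, mul_assoc, mul_comm (w _)]

theorem Apq_pow_eq (hp : 0 < p) (hw : DiscWeight (powWeight x w)) (n : ℕ) :
    Apq p x w (fun z => z ^ n) = 2 * π * momentW (powWeight x w) (p * n + 1) := by
  rw [Apq_eq_integral_circleAverage hp hw (by fun_prop), momentW]
  congr 1
  refine setIntegral_congr_fun measurableSet_Ioo fun r hr => ?_
  have hmean : circleAverage (fun z : ℂ => ‖z ^ n‖ ^ p) 0 r = r ^ (p * n) := by
    refine circleAverage_const_on_circle fun z hz => ?_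
    rw [abs_of_pos hr.1, mem_sphere_zero_iff_norm] at hz
    simp only [norm_pow, hz]
    rw [← rpow_natCast_mul hr.1.le, mul_comm]
  simp only [hmean, rpow_add hr.1, rpow_one]
  ring

/-- Two-sided comparability of two weighted Bergman-type integrals over all analytic functions on
the unit disc. -/
def BergmanComparable (p x : ℝ) (v : ℝ → ℝ) (y : ℝ) (w : ℝ → ℝ) : Prop :=
  ∃ C : ℝ, 1 ≤ C ∧ ∀ f : ℂ → ℂ, DifferentiableOn ℂ f (ball (0 : ℂ) 1) →
    (1 / C) * Apq p x v f ≤ Apq p y w f ∧ Apq p y w f ≤ C * Apq p x v f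

theorem monotoneOn_mul_circleAverage_norm_rpow (hp : 0 < p)
    (hf : DifferentiableOn ℂ f (ball 0 1)) :
    MonotoneOn (fun r => r * circleAverage (fun z => ‖f z‖ ^ p) 0 r) (Ioo 0 1) :=
  monotoneOn_id.mul ((monotoneOn_circleAverage_norm_rpow hp hf).mono Ioo_subset_Ico_self)
    (fun _ hr => hr.1.le) fun _ _ => circleAverage_nonneg_of_nonneg fun _ _ => by positivity

theorem bergmanComparable_of_isTheta {v : ℝ → ℝ} {y : ℝ} (hp : 0 < p)
    (hV : DiscWeight (powWeight x v)) (hW : DiscWeight (powWeight y w))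
    (h : tailInt (powWeight x v) =Θ[𝓟 (Ico 0 1)] tailInt (powWeight y w)) :
    BergmanComparable p x v y w := by
  obtain ⟨A, -, hVW⟩ := (isBigO_principal_iff_of_nonneg (fun s hs => hV.tailInt_nonneg hs.1)
    fun s hs => hW.tailInt_nonneg hs.1).1 h.1
  obtain ⟨B, -, hWV⟩ := (isBigO_principal_iff_of_nonneg (fun s hs => hW.tailInt_nonneg hs.1)
    fun s hs => hV.tailInt_nonneg hs.1).1 h.2
  set C := max 1 (max A B)
  have hC : 0 < C := zero_lt_one.trans_le (le_max_left _ _)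
  replace hVW (s : ℝ) (hs : s ∈ Ico 0 1) := (hVW s hs).trans <|
    mul_le_mul_of_nonneg_right (show A ≤ C by simp [C]) (hW.tailInt_nonneg hs.1)
  replace hWV (s : ℝ) (hs : s ∈ Ico 0 1) := (hWV s hs).trans <|
    mul_le_mul_of_nonneg_right (show B ≤ C by simp [C]) (hV.tailInt_nonneg hs.1)
  refine ⟨C, le_max_left _ _, fun f hf => ?_⟩
  have hG := monotoneOn_mul_circleAverage_norm_rpow hp hf
  set G := fun r => r * circleAverage (fun z => ‖f z‖ ^ p) 0 r
  have hG0 (r : ℝ) (hr : r ∈ Ioo 0 1) : 0 ≤ G r :=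
    mul_nonneg hr.1.le (circleAverage_nonneg_of_nonneg fun _ _ => by positivity)
  have integral_le {U U' : ℝ → ℝ} (hU : DiscWeight U) (hU' : DiscWeight U')
      (h : ∀ s ∈ Ico 0 1, tailInt U s ≤ C * tailInt U' s)
      (h' : ∀ s ∈ Ico 0 1, tailInt U' s ≤ C * tailInt U s) :
      2 * π * ∫ r in Ioo 0 1, G r * U r ≤ C * (2 * π * ∫ r in Ioo 0 1, G r * U' r) := by
    by_cases hint : IntegrableOn (fun r => G r * U' r) (Ioo 0 1)
    · rw [mul_left_comm C]
      gcongr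
      exact (hU.integral_mul_le_of_tailInt_le hU' hG hG0 hC.le h hint).2
    · have hint' : ¬IntegrableOn (fun r => G r * U r) (Ioo 0 1) := fun hint' =>
        hint (hU'.integral_mul_le_of_tailInt_le hU hG hG0 hC.le h' hint').1
      simp only [integral_undef hint, integral_undef hint', mul_zero, le_refl]
  rw [Apq_eq_integral_circleAverage hp hV hf, Apq_eq_integral_circleAverage hp hW hf, one_div,
    inv_mul_le_iff₀ hC]
  exact ⟨integral_le hV hW hVW hWV, integral_le hW hV hWV hVW⟩

end Comparison

section TailsByParts

theorem setIntegral_Ioo_eq_sub_of_hasDerivAt_of_nonneg {P g : ℝ → ℝ} {a b : ℝ} (hab : a ≤ b)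
    (hP : ContinuousOn P (Icc a b)) (hPg : ∀ t ∈ Ioo a b, HasDerivAt P (g t) t)
    (hg : ∀ t ∈ Ioo a b, 0 ≤ g t) : ∫ t in Ioo a b, g t = P b - P a := by
  rw [← integral_Ioc_eq_integral_Ioo, ← intervalIntegral.integral_of_le hab]
  refine intervalIntegral.integral_eq_sub_of_hasDerivAt_of_le hab hP hPg ?_
  rw [intervalIntegrable_iff_integrableOn_Ioc_of_le hab]
  exact intervalIntegral.integrableOn_deriv_of_nonneg hP hPg hg

/-- Integration by parts against a tail: `∫ w (P - P s) = ∫ P' ŵ`, by Fubini on `{t < r}`. -/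
theorem DiscWeight.integral_mul_sub_eq_integral_deriv_mul_tailInt {w P g : ℝ → ℝ} {s : ℝ}
    (hw : DiscWeight w) (hs : 0 ≤ s) (hP : ContinuousOn P (Ico s 1))
    (hPg : ∀ t ∈ Ioo s 1, HasDerivAt P (g t) t) (hg : Measurable g) (hg0 : ∀ t ∈ Ioo s 1, 0 ≤ g t)
    (hint : IntegrableOn (fun t => g t * tailInt w t) (Ioo s 1)) :
    IntegrableOn (fun r => w r * (P r - P s)) (Ioo s 1) ∧
      ∫ r in Ioo s 1, w r * (P r - P s) = ∫ t in Ioo s 1, g t * tailInt w t := by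
  set μ := volume.restrict (Ioo s 1)
  set k : ℝ × ℝ → ℝ := {z | z.1 < z.2}.indicator fun z => g z.1 * w z.2
  have hkm : Measurable k :=
    ((hg.comp measurable_fst).mul (hw.measurable.comp measurable_snd)).indicator
      (measurableSet_lt measurable_fst measurable_snd)
  have hk_fst (t : ℝ) : (fun r => k (t, r)) = (Ioi t).indicator fun r => g t * w r := by
    ext r; simp [k, indicator]
  have hk_snd (r : ℝ) : (fun t => k (t, r)) = (Iio r).indicator fun t => g t * w r := by
    ext t; simp [k, indicator]
  have inner_fst (t : ℝ) (ht : t ∈ Ioo s 1) : ∫ r, k (t, r) ∂μ = g t * tailInt w t := by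
    rw [hk_fst, integral_indicator measurableSet_Ioi, Measure.restrict_restrict measurableSet_Ioi,
      Ioi_inter_Ioo, max_eq_left ht.1.le, integral_const_mul, tailInt]
  have inner_snd (r : ℝ) (hr : r ∈ Ioo s 1) : ∫ t, k (t, r) ∂μ = w r * (P r - P s) := by
    rw [hk_snd, integral_indicator measurableSet_Iio, Measure.restrict_restrict measurableSet_Iio,
      Iio_inter_Ioo, min_eq_left hr.2.le, integral_mul_const, mul_comm,
      setIntegral_Ioo_eq_sub_of_hasDerivAt_of_nonneg hr.1.le (hP.mono (Icc_subset_Ico_right hr.2))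
        (fun t ht => hPg t ⟨ht.1, ht.2.trans hr.2⟩) fun t ht => hg0 t ⟨ht.1, ht.2.trans hr.2⟩]
  have hk_nonneg (t : ℝ) (ht : t ∈ Ioo s 1) : 0 ≤ᵐ[μ] fun r => k (t, r) := by
    filter_upwards [hw.ae_nonneg hs] with r hr
    exact indicator_apply_nonneg fun _ => mul_nonneg (hg0 t ht) hr
  have hk : Integrable k (μ.prod μ) := by
    rw [integrable_prod_iff hkm.aestronglyMeasurable]
    refine ⟨.of_forall fun t => ?_, hint.congr ?_⟩
    · rw [hk_fst]
      exact ((hw.integrableOn_Ioo hs).const_mul (g t)).indicator measurableSet_Ioi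
    · filter_upwards [ae_restrict_mem measurableSet_Ioo] with t ht
      rw [← inner_fst t ht]
      exact integral_congr_ae ((hk_nonneg t ht).mono fun r hr => (norm_of_nonneg hr).symm)
  constructor
  · exact hk.integral_prod_right.congr ((ae_restrict_mem measurableSet_Ioo).mono inner_snd)
  · rw [← setIntegral_congr_fun measurableSet_Ioo inner_snd,
      ← setIntegral_congr_fun measurableSet_Ioo inner_fst, ← integral_prod_symm _ hk,
      integral_prod _ hk]

end TailsByParts

section Weights

theorem discWeight_of_pos {w : ℝ → ℝ} (hm : Measurable w) (hpos : ∀ t ∈ Ico 0 1, 0 < w t)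
    (hint : IntegrableOn w (Ioo 0 1)) : DiscWeight w where
  measurable := hm
  nonneg t ht := (hpos t ht).le
  integrableOn := hint
  tail_pos s hs := by
    have hpos' (t : ℝ) (ht : t ∈ Ioo s 1) := hpos t ⟨hs.1.trans ht.1.le, ht.2⟩
    rw [tailInt, setIntegral_pos_iff_support_of_nonneg_ae
      ((ae_restrict_mem measurableSet_Ioo).mono fun t ht => (hpos' t ht).le)
      (hint.mono_set (Ioo_subset_Ioo_left hs.1)),
      inter_eq_right.2 fun t ht => Function.mem_support.2 (hpos' t ht).ne', Real.volume_Ioo,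
      ENNReal.ofReal_pos]
    exact sub_pos.2 hs.2

theorem integrableOn_powWeight {w : ℝ → ℝ} (hw : IntegrableOn w (Ioo 0 1)) {x : ℝ} (hx : 0 ≤ x) :
    IntegrableOn (powWeight x w) (Ioo 0 1) :=
  hw.mul_bdd (c := 1) ((by fun_prop : Measurable fun t : ℝ => (1 - t) ^ x).aestronglyMeasurable) <|
    (ae_restrict_mem measurableSet_Ioo).mono fun t ht => by
      rw [norm_of_nonneg (rpow_nonneg (sub_nonneg.2 ht.2.le) x)]
      exact rpow_le_one (sub_nonneg.2 ht.2.le) (sub_le_self 1 ht.1.le) hx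

theorem discWeight_powWeight {w : ℝ → ℝ} {x : ℝ} (hw : DiscWeight w)
    (hint : IntegrableOn (powWeight x w) (Ioo 0 1)) : DiscWeight (powWeight x w) where
  measurable := hw.measurable.mul ((measurable_const.sub measurable_id).pow_const x)
  nonneg t ht := mul_nonneg (hw.nonneg t ht) (rpow_nonneg (sub_nonneg.2 ht.2.le) x)
  integrableOn := hint
  tail_pos s hs := by
    have hpos := hw.tail_pos s hs
    rw [tailInt, setIntegral_pos_iff_support_of_nonneg_ae (hw.ae_nonneg hs.1)
      (hw.integrableOn_Ioo hs.1)] at hpos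
    have hnonneg : 0 ≤ᵐ[volume.restrict (Ioo s 1)] powWeight x w :=
      (ae_restrict_mem measurableSet_Ioo).mono fun t ht => mul_nonneg
        (hw.nonneg t ⟨hs.1.trans ht.1.le, ht.2⟩) (rpow_nonneg (sub_nonneg.2 ht.2.le) x)
    rw [tailInt, setIntegral_pos_iff_support_of_nonneg_ae hnonneg
      (hint.mono_set (Ioo_subset_Ioo_left hs.1))]
    exact hpos.trans_le <| measure_mono fun t ht =>
      ⟨mul_ne_zero ht.1 (rpow_pos_of_pos (sub_pos.2 ht.2.2) x).ne', ht.2⟩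

namespace DiscWeight

variable {w : ℝ → ℝ} (hw : DiscWeight w)
include hw

theorem integrableOn_tailInt : IntegrableOn (tailInt w) (Ioo 0 1) :=
  ((hw.antitoneOn_tailInt.mono Icc_subset_Ici_self).integrableOn_isCompact isCompact_Icc).mono_set
    Ioo_subset_Icc_self

/-- Integration by parts of `ŵ (1-t)^x` on `(s, 1)`. -/
theorem tailInt_powWeight_add {x s : ℝ} (hs : s ∈ Ico 0 1)
    (hint : IntegrableOn (powWeight (x - 1) (tailInt w)) (Ioo 0 1)) :
    IntegrableOn (powWeight x w) (Ioo s 1) ∧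
      tailInt (powWeight x w) s + x * tailInt (powWeight (x - 1) (tailInt w)) s =
        tailInt w s * (1 - s) ^ x := by
  rcases eq_or_ne x 0 with rfl | hx
  · have : powWeight 0 w = w := by ext t; simp [powWeight]
    rw [this]
    exact ⟨hw.integrableOn_Ioo hs.1, by simp⟩
  have hcont : ContinuousOn (fun t : ℝ => -(1 - t) ^ x / x) (Ico s 1) := fun t ht =>
    (((continuousAt_const.sub continuousAt_id).rpow_const
      (Or.inl (sub_pos.2 ht.2).ne')).neg.div_const x).continuousWithinAt
  have hderiv (t : ℝ) (ht : t ∈ Ioo s 1) :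
      HasDerivAt (fun t : ℝ => -(1 - t) ^ x / x) ((1 - t) ^ (x - 1)) t := by
    convert! ((((hasDerivAt_id t).const_sub 1).rpow_const (p := x)
      (Or.inl (sub_pos.2 ht.2).ne')).neg.div_const x) using 1
    simp only [id_eq]
    field_simp
  obtain ⟨hint', heq⟩ := hw.integral_mul_sub_eq_integral_deriv_mul_tailInt hs.1 hcont hderiv
    ((measurable_const.sub measurable_id).pow_const (x - 1))
    (fun t ht => rpow_nonneg (sub_nonneg.2 ht.2.le) _)
    ((hint.mono_set (Ioo_subset_Ioo_left hs.1)).congr_fun (fun t _ => mul_comm _ _)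
      measurableSet_Ioo)
  have hV (t : ℝ) : powWeight x w t =
      w t * (1 - s) ^ x - x * (w t * (-(1 - t) ^ x / x - -(1 - s) ^ x / x)) := by
    rw [powWeight]; field_simp; ring
  simp only [mul_comm (_ ^ (x - 1))] at heq
  have hw_int := (hw.integrableOn_Ioo hs.1).mul_const ((1 - s) ^ x)
  refine ⟨(hw_int.sub (hint'.const_mul x)).congr (.of_forall fun t => (hV t).symm), ?_⟩
  rw [tailInt, setIntegral_congr_fun measurableSet_Ioo fun t _ => hV t,
    integral_sub hw_int (hint'.const_mul x), integral_mul_const, integral_const_mul, heq]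
  exact sub_add_cancel _ _

end DiscWeight

end Weights

section Moments

theorem integrableOn_rpow_mul {w : ℝ → ℝ} (hw : IntegrableOn w (Ioo 0 1)) {x : ℝ} (hx : 0 ≤ x) :
    IntegrableOn (fun t => t ^ x * w t) (Ioo 0 1) :=
  hw.bdd_mul (c := 1) (measurable_id.pow_const x).aestronglyMeasurable <|
    (ae_restrict_mem measurableSet_Ioo).mono fun t ht => by
      rw [norm_of_nonneg (rpow_nonneg ht.1.le x)]
      exact rpow_le_one ht.1.le ht.2.le hx

namespace DiscWeight

variable {w : ℝ → ℝ} (hw : DiscWeight w)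
include hw

theorem momentW_nonneg (x : ℝ) : 0 ≤ momentW w x :=
  setIntegral_nonneg measurableSet_Ioo fun t ht =>
    mul_nonneg (rpow_nonneg ht.1.le x) (hw.nonneg t ⟨ht.1.le, ht.2⟩)

theorem momentW_eq_mul_momentW_tailInt {x : ℝ} (hx : 1 ≤ x) :
    momentW w x = x * momentW (tailInt w) (x - 1) := by
  have hx0 : x ≠ 0 := by positivity
  have hint := (integrableOn_rpow_mul hw.integrableOn_tailInt (sub_nonneg.2 hx)).const_mul x
  simp only [← mul_assoc] at hint
  have h := (hw.integral_mul_sub_eq_integral_deriv_mul_tailInt le_rfl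
    (continuous_id.rpow_const fun _ => Or.inr (by positivity)).continuousOn
    (fun t _ => (hasDerivAt_rpow_const (p := x) (Or.inr hx)))
    ((measurable_id.pow_const (x - 1)).const_mul x)
    (fun t ht => mul_nonneg (by positivity) (rpow_nonneg ht.1.le _)) hint).2
  simp only [id_eq, zero_rpow hx0, sub_zero, mul_comm (w _), mul_assoc, integral_const_mul] at h
  exact h

theorem integral_mul_le_tailInt_add {φ ψ : ℝ → ℝ} {s : ℝ} (hs : 0 ≤ s)
    (hφ : IntegrableOn (fun t => φ t * w t) (Ioo 0 1))
    (hψ : IntegrableOn (fun t => ψ t * w t) (Ioo 0 1))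
    (hψ0 : ∀ t ∈ Ioo 0 1, 0 ≤ ψ t) (hφ1 : ∀ t ∈ Ioo 0 1, φ t ≤ 1)
    (hφψ : ∀ t ∈ Ioo 0 1, t ≤ s → φ t ≤ ψ t) :
    ∫ t in Ioo 0 1, φ t * w t ≤ tailInt w s + ∫ t in Ioo 0 1, ψ t * w t := by
  have htail : tailInt w s = ∫ t in Ioo 0 1, (Ioi s).indicator w t := by
    rw [integral_indicator measurableSet_Ioi, Measure.restrict_restrict measurableSet_Ioi,
      Ioi_inter_Ioo, max_eq_left hs, tailInt]
  have hind := hw.integrableOn.indicator (measurableSet_Ioi (a := s))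
  rw [htail, ← integral_add hind hψ]
  refine setIntegral_mono_on hφ (hind.add hψ) measurableSet_Ioo fun t ht => ?_
  have hwt := hw.nonneg t ⟨ht.1.le, ht.2⟩
  rcases le_or_gt t s with hts | hst
  · rw [indicator_of_notMem (notMem_Ioi.2 hts), zero_add]
    exact mul_le_mul_of_nonneg_right (hφψ t ht hts) hwt
  · rw [indicator_of_mem (mem_Ioi.2 hst)]
    exact (mul_le_of_le_one_left hwt (hφ1 t ht)).trans
      (le_add_of_nonneg_right (mul_nonneg (hψ0 t ht) hwt))

theorem rpow_mul_tailInt_le_momentW {s x : ℝ} (hs : 0 ≤ s) (hx : 0 ≤ x) :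
    s ^ x * tailInt w s ≤ momentW w x := by
  have hint := integrableOn_rpow_mul hw.integrableOn hx
  calc s ^ x * tailInt w s = ∫ t in Ioo s 1, s ^ x * w t := (integral_const_mul _ _).symm
    _ ≤ ∫ t in Ioo s 1, t ^ x * w t :=
      setIntegral_mono_on ((hw.integrableOn_Ioo hs).const_mul _)
        (hint.mono_set (Ioo_subset_Ioo_left hs)) measurableSet_Ioo fun t ht =>
          mul_le_mul_of_nonneg_right (rpow_le_rpow hs ht.1.le hx)
            (hw.nonneg t ⟨hs.trans ht.1.le, ht.2⟩)
    _ ≤ momentW w x := setIntegral_mono_set hint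
      ((ae_restrict_mem measurableSet_Ioo).mono fun t ht =>
        mul_nonneg (rpow_nonneg ht.1.le x) (hw.nonneg t ⟨ht.1.le, ht.2⟩))
      (Ioo_subset_Ioo_left hs).eventuallyLE

theorem momentW_add_le {s x y : ℝ} (hs : 0 ≤ s) (hx : 0 ≤ x) (hy : 0 ≤ y) :
    momentW w (x + y) ≤ tailInt w s + s ^ y * momentW w x := by
  have hint := (integrableOn_rpow_mul hw.integrableOn hx).const_mul (s ^ y)
  simp only [← mul_assoc] at hint
  have h := hw.integral_mul_le_tailInt_add hs
    (integrableOn_rpow_mul hw.integrableOn (add_nonneg hx hy)) hint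
    (fun t ht => mul_nonneg (rpow_nonneg hs y) (rpow_nonneg ht.1.le x))
    (fun t ht => rpow_le_one ht.1.le ht.2.le (add_nonneg hx hy)) fun t ht hts => by
      rw [rpow_add ht.1, mul_comm]
      exact mul_le_mul_of_nonneg_right (rpow_le_rpow ht.1.le hts hy) (rpow_nonneg ht.1.le x)
  simpa only [mul_assoc, integral_const_mul] using! h

theorem momentW_le_tailInt_add_inv_mul {s x : ℝ} (hs : s ∈ Ico 0 1) (hx : 1 ≤ x) :
    momentW w x ≤ tailInt w s + (1 - s)⁻¹ * momentW (powWeight 1 w) (x - 1) := by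
  have hs' : 0 < 1 - s := sub_pos.2 hs.2
  have hx0 : 0 ≤ x := zero_le_one.trans hx
  have hψ (t : ℝ) : (1 - s)⁻¹ * (t ^ (x - 1) * powWeight 1 w t) =
      (1 - s)⁻¹ * (t ^ (x - 1) * (1 - t)) * w t := by
    rw [powWeight, rpow_one]; ring
  have hint := (integrableOn_rpow_mul (integrableOn_powWeight hw.integrableOn zero_le_one)
    (sub_nonneg.2 hx)).const_mul (1 - s)⁻¹
  rw [momentW, momentW, ← integral_const_mul]
  simp only [hψ] at hint ⊢
  refine hw.integral_mul_le_tailInt_add hs.1 (integrableOn_rpow_mul hw.integrableOn hx0) hint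
    (fun t ht => ?_) (fun t ht => rpow_le_one ht.1.le ht.2.le hx0) fun t ht hts => ?_
  · have := ht.1
    have : 0 ≤ 1 - t := sub_nonneg.2 ht.2.le
    positivity
  · have htx : t ^ x = t ^ (x - 1) * t := by rw [← rpow_add_one ht.1.ne', sub_add_cancel]
    rw [le_inv_mul_iff₀ hs', htx, mul_comm, mul_assoc]
    refine mul_le_mul_of_nonneg_left ?_ (rpow_nonneg ht.1.le _)
    nlinarith [ht.2]

/-- Markov's inequality for the measure `t^x w(t) dt`. -/
theorem momentW_le_two_mul_tailInt {s x A : ℝ} (hs : s ∈ Ico 0 1) (hx : 1 ≤ x)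
    (hA : x * momentW (powWeight 1 w) (x - 1) ≤ A * momentW w x)
    (hAx : 2 * A ≤ x * (1 - s)) : momentW w x ≤ 2 * tailInt w s := by
  have hs' : 0 < 1 - s := sub_pos.2 hs.2
  have hx0 : 0 < x := zero_lt_one.trans_le hx
  have hhalf : (1 - s)⁻¹ * momentW (powWeight 1 w) (x - 1) ≤ momentW w x / 2 := by
    have hmom := hw.momentW_nonneg x
    rw [inv_mul_le_iff₀ hs', ← mul_le_mul_iff_right₀ hx0]
    nlinarith
  linarith [hw.momentW_le_tailInt_add_inv_mul hs hx]

end DiscWeight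

end Moments

section MomentsToTails

open Asymptotics Filter Topology

theorem rpow_le_exp_neg_mul {s y : ℝ} (hs : 0 ≤ s) (hy : 0 ≤ y) : s ^ y ≤ exp (-(y * (1 - s))) :=
  calc s ^ y ≤ exp (s - 1) ^ y := rpow_le_rpow hs (by linarith [add_one_le_exp (s - 1)]) hy
    _ = exp (-(y * (1 - s))) := by rw [← exp_mul]; ring_nf

theorem exp_neg_two_mul_le_rpow {s x : ℝ} (hs : 1 / 2 ≤ s) (hs1 : s ≤ 1) (hx : 0 ≤ x) :
    exp (-(2 * (x * (1 - s)))) ≤ s ^ x := by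
  have hs0 : 0 < s := by linarith
  have hlog : -(2 * (1 - s)) ≤ log s := calc
    -(2 * (1 - s)) ≤ 1 - s⁻¹ := by
      rw [← sub_nonneg]
      have : 1 - s⁻¹ - -(2 * (1 - s)) = (1 - s) * (2 * s - 1) / s := by field_simp; ring
      rw [this]
      exact div_nonneg (mul_nonneg (by linarith) (by linarith)) hs0.le
    _ ≤ log s := one_sub_inv_le_log_of_pos hs0
  rw [rpow_def_of_pos hs0, exp_le_exp]
  nlinarith

theorem exists_nat_le_mul_mul_le {p d a : ℝ} (hp : 0 < p) (hd : 0 < d) (hd1 : d ≤ 1)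
    (ha : 0 ≤ a) : ∃ n : ℕ, a ≤ p * n * d ∧ p * n * d ≤ a + p := by
  have hpd : 0 < p * d := mul_pos hp hd
  refine ⟨⌈a / (p * d)⌉₊, ?_, ?_⟩
  · rw [mul_right_comm, ← div_le_iff₀' hpd]
    exact Nat.le_ceil _
  · have hceil := (Nat.ceil_lt_add_one (div_nonneg ha hpd.le)).le
    calc p * ⌈a / (p * d)⌉₊ * d = p * d * ⌈a / (p * d)⌉₊ := mul_right_comm _ _ _
      _ ≤ p * d * (a / (p * d) + 1) := mul_le_mul_of_nonneg_left hceil hpd.le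
      _ = a + p * d := by field_simp
      _ ≤ a + p := by gcongr; exact mul_le_of_le_one_right hp.le hd1

theorem isBigO_of_le_on_half {F G : ℝ → ℝ} {B C : ℝ} (hF : ∀ s ∈ Ico 0 1, 0 ≤ F s)
    (hG : ∀ s ∈ Ico 0 1, 0 < G s) (hGanti : AntitoneOn G (Ico 0 1))
    (hFB : ∀ s ∈ Ico 0 (1 / 2), F s ≤ B) (h : ∀ s ∈ Ico (1 / 2) 1, F s ≤ C * G s) :
    F =O[𝓟 (Ico 0 1)] G := by
  have hhalf : (1 / 2 : ℝ) ∈ Ico 0 1 := by norm_num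
  refine IsBigO.of_bound (max C (B / G (1 / 2))) (eventually_principal.2 fun s hs => ?_)
  have hGs := (hG s hs).le
  rw [norm_of_nonneg (hF s hs), norm_of_nonneg hGs]
  rcases le_or_gt (1 / 2) s with hs' | hs'
  · exact (h s ⟨hs', hs.2⟩).trans (mul_le_mul_of_nonneg_right (le_max_left _ _) hGs)
  · have hFB' := hFB s ⟨hs.1, hs'⟩
    calc F s ≤ B := hFB'
      _ = B / G (1 / 2) * G (1 / 2) := (div_mul_cancel₀ _ (hG _ hhalf).ne').symm
      _ ≤ B / G (1 / 2) * G s := mul_le_mul_of_nonneg_left (hGanti hs hhalf hs'.le)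
          (div_nonneg ((hF s hs).trans hFB') (hG _ hhalf).le)
      _ ≤ _ := mul_le_mul_of_nonneg_right (le_max_right _ _) hGs

namespace DiscWeight

variable {v w : ℝ → ℝ} (hv : DiscWeight v) (hw : DiscWeight w)

include hw in
theorem tailInt_le_exp_mul_momentW {s x M : ℝ} (hs : s ∈ Ico (1 / 2) 1) (hx : 0 ≤ x)
    (hM : x * (1 - s) ≤ M) : tailInt w s ≤ exp (2 * M) * momentW w x := by
  have hs0 : 0 ≤ s := one_half_pos.le.trans hs.1
  rw [← inv_mul_le_iff₀ (exp_pos _), ← exp_neg]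
  calc exp (-(2 * M)) * tailInt w s ≤ s ^ x * tailInt w s :=
        mul_le_mul_of_nonneg_right ((exp_le_exp.2 (by linarith)).trans
          (exp_neg_two_mul_le_rpow hs.1 hs.2.le hx)) (hw.tailInt_nonneg hs0)
    _ ≤ momentW w x := hw.rpow_mul_tailInt_le_momentW hs0 hx

include hv hw

theorem isBigO_tailInt_of_le_on_half {C : ℝ}
    (h : ∀ s ∈ Ico (1 / 2) 1, tailInt v s ≤ C * tailInt w s) :
    tailInt v =O[𝓟 (Ico 0 1)] tailInt w :=
  isBigO_of_le_on_half (fun _ hs => hv.tailInt_nonneg hs.1) hw.tail_pos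
    (hw.antitoneOn_tailInt.mono Ico_subset_Ici_self)
    (fun _ hs => hv.antitoneOn_tailInt self_mem_Ici hs.1 hs.1) h

variable {p A C : ℝ} (hp : 0 < p) (hA : 0 < A) (hC : 0 < C)
  (hreg : ∀ n : ℕ, (p * n + 1) * momentW (powWeight 1 w) (p * n) ≤ A * momentW w (p * n + 1))
  (hvw : ∀ n : ℕ, momentW v (p * n + 1) ≤ C * momentW w (p * n + 1))
include hp hA hC hreg hvw

omit hv hvw hC in
theorem exists_nat_momentW_le_two_mul_tailInt {s : ℝ} (hs : s ∈ Ico 0 1) :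
    ∃ n : ℕ, 2 * A ≤ p * n * (1 - s) ∧ p * n * (1 - s) ≤ 2 * A + p ∧
      momentW w (p * n + 1) ≤ 2 * tailInt w s := by
  obtain ⟨n, hle, hge⟩ := exists_nat_le_mul_mul_le hp (sub_pos.2 hs.2) (sub_le_self 1 hs.1)
    (by positivity : 0 ≤ 2 * A)
  refine ⟨n, hle, hge, hw.momentW_le_two_mul_tailInt hs (le_add_of_nonneg_left (by positivity))
    (by rw [add_sub_cancel_right]; exact hreg n) (hle.trans ?_)⟩
  gcongr
  · exact sub_nonneg.2 hs.2.le
  · exact le_add_of_nonneg_right zero_le_one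

theorem isBigO_tailInt_of_momentW_le : tailInt v =O[𝓟 (Ico 0 1)] tailInt w := by
  refine hv.isBigO_tailInt_of_le_on_half hw (C := exp (2 * (2 * A + p + 1)) * (C * 2))
    fun s hs => ?_
  obtain ⟨n, -, hn, hwn⟩ := hw.exists_nat_momentW_le_two_mul_tailInt hp hA hreg
    ⟨one_half_pos.le.trans hs.1, hs.2⟩
  have hx : (p * n + 1) * (1 - s) ≤ 2 * A + p + 1 := by linarith [hs.1]
  calc tailInt v s ≤ exp (2 * (2 * A + p + 1)) * momentW v (p * n + 1) :=
        hv.tailInt_le_exp_mul_momentW hs (by positivity) hx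
    _ ≤ exp (2 * (2 * A + p + 1)) * (C * (2 * tailInt w s)) := by
        gcongr
        exact (hvw n).trans (mul_le_mul_of_nonneg_left hwn hC.le)
    _ = exp (2 * (2 * A + p + 1)) * (C * 2) * tailInt w s := by ring

variable (hwv : ∀ n : ℕ, momentW w (p * n + 1) ≤ C * momentW v (p * n + 1))
include hwv

/-- The moment of `w` sees the tail at `1 - (1-s)/κ`, where doubling the exponent costs only a
constant factor; the part of the doubled moment of `v` on `(0, s)` is damped by `exp (-2Aκ)`. -/
theorem exists_nat_momentW_le_mul_tailInt_add {κ s : ℝ} (hκ : 1 ≤ κ) (hs : s ∈ Ico (1 / 2) 1) :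
    ∃ n : ℕ, (p * n + 1) * (1 - s) ≤ κ * (2 * A + p + 1) ∧ momentW w (p * n + 1) ≤
      2 * (exp (2 * (2 * (2 * A + p) + 1)) * C) *
        (tailInt v s + exp (-(2 * A * κ)) * (C * momentW w (p * n + 1))) := by
  have hκ0 : 0 < κ := zero_lt_one.trans_le hκ
  have hd : 0 < 1 - s := sub_pos.2 hs.2
  have hs0 : 0 ≤ s := one_half_pos.le.trans hs.1
  set s₀ := 1 - (1 - s) / κ
  have hs₀d : 1 - s = κ * (1 - s₀) := by simp only [s₀]; field_simp; ring
  have hs₀ : s₀ ∈ Ico (1 / 2) 1 :=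
    ⟨hs.1.trans (by nlinarith), by simp only [s₀]; linarith [div_pos hd hκ0]⟩
  obtain ⟨n, hle, hge, hwn⟩ := hw.exists_nat_momentW_le_two_mul_tailInt hp hA hreg
    ⟨one_half_pos.le.trans hs₀.1, hs₀.2⟩
  have hpn : 0 ≤ p * n := by positivity
  have hdouble : p * (2 * n : ℕ) + 1 = p * n + 1 + p * n := by push_cast; ring
  have hdamp : s ^ (p * n) ≤ exp (-(2 * A * κ)) :=
    (rpow_le_exp_neg_mul hs0 hpn).trans (exp_le_exp.2 (by rw [hs₀d]; nlinarith))
  refine ⟨n, by rw [hs₀d]; nlinarith [hs₀.1], hwn.trans ?_⟩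
  rw [mul_assoc]
  gcongr 2 * ?_
  calc tailInt w s₀
      ≤ exp (2 * (2 * (2 * A + p) + 1)) * momentW w (p * (2 * n : ℕ) + 1) :=
        hw.tailInt_le_exp_mul_momentW hs₀ (by positivity) (by push_cast; nlinarith [hs₀.1])
    _ ≤ exp (2 * (2 * (2 * A + p) + 1)) * (C * momentW v (p * n + 1 + p * n)) := by
        rw [← hdouble]; gcongr; exact hwv _
    _ ≤ exp (2 * (2 * (2 * A + p) + 1)) *
          (C * (tailInt v s + exp (-(2 * A * κ)) * (C * momentW w (p * n + 1)))) := by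
        gcongr
        exact (hv.momentW_add_le hs0 (by positivity) hpn).trans (add_le_add le_rfl
          (mul_le_mul hdamp (hvw n) (hv.momentW_nonneg _) (exp_pos _).le))
    _ = _ := by ring

theorem isBigO_tailInt_of_le_momentW : tailInt w =O[𝓟 (Ico 0 1)] tailInt v := by
  set E := 2 * (exp (2 * (2 * (2 * A + p) + 1)) * C)
  have hlim : Tendsto (fun κ => E * (exp (-(2 * A * κ)) * C)) atTop (𝓝 (E * (0 * C))) :=
    ((tendsto_exp_neg_atTop_nhds_zero.comp
      (tendsto_id.const_mul_atTop (by positivity : 0 < 2 * A))).mul_const C).const_mul E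
  rw [zero_mul, mul_zero] at hlim
  obtain ⟨κ, hκE, hκ⟩ :=
    ((hlim.eventually_le_const one_half_pos).and (eventually_ge_atTop 1)).exists
  refine hw.isBigO_tailInt_of_le_on_half hv
    (C := exp (2 * (κ * (2 * A + p + 1))) * (2 * E)) fun s hs => ?_
  obtain ⟨n, hn, hmom⟩ := hv.exists_nat_momentW_le_mul_tailInt_add hw hp hA hC hreg hvw hwv hκ hs
  have hx : 0 ≤ p * n + 1 := by positivity
  have habsorb : momentW w (p * n + 1) ≤ 2 * E * tailInt v s := by
    have := mul_le_mul_of_nonneg_right hκE (hw.momentW_nonneg (p * n + 1))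
    linarith
  calc tailInt w s ≤ exp (2 * (κ * (2 * A + p + 1))) * momentW w (p * n + 1) :=
        hw.tailInt_le_exp_mul_momentW hs hx hn
    _ ≤ exp (2 * (κ * (2 * A + p + 1))) * (2 * E * tailInt v s) := by gcongr
    _ = _ := (mul_assoc _ _ _).symm

end DiscWeight

end MomentsToTails

section WeightPair

open Asymptotics Filter

variable {ω : ℝ → ℝ} {x : ℝ} (hω : IsRadialWeight ω)
  (hint : IntegrableOn (powWeight (x - 1) (tailInt ω)) (Ioo 0 1))
include hω hint

theorem discWeight_powWeight_tailInt : DiscWeight (powWeight (x - 1) (tailInt ω)) :=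
  discWeight_powWeight (discWeight_of_pos (measurable_tailInt hω.1 hω.2.1)
    hω.discWeight.tail_pos hω.discWeight.integrableOn_tailInt) hint

theorem discWeight_powWeight_of_tailInt : DiscWeight (powWeight x ω) :=
  discWeight_powWeight hω.discWeight
    (hω.discWeight.tailInt_powWeight_add ⟨le_rfl, zero_lt_one⟩ hint).1

omit hω hint in
theorem powWeight_one_powWeight_sub_one {u : ℝ → ℝ} {t : ℝ} (ht : t < 1) :
    powWeight 1 (powWeight (x - 1) u) t = powWeight x u t := by
  simp only [powWeight]
  rw [mul_assoc, ← rpow_add (sub_pos.2 ht), sub_add_cancel]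

theorem tailInt_powWeight_add_eventuallyEq :
    (fun s => tailInt (powWeight x ω) s + x * tailInt (powWeight (x - 1) (tailInt ω)) s)
      =ᶠ[𝓟 (Ico 0 1)] powWeight x (tailInt ω) :=
  eventually_principal.2 fun _ hs => (hω.discWeight.tailInt_powWeight_add hs hint).2

theorem momentW_powWeight_add {y : ℝ} (hy : 1 ≤ y) :
    momentW (powWeight x ω) y + x * momentW (powWeight (x - 1) (tailInt ω)) y =
      y * momentW (powWeight 1 (powWeight (x - 1) (tailInt ω))) (y - 1) := by
  have hV := discWeight_powWeight_of_tailInt hω hint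
  have hW := discWeight_powWeight_tailInt hω hint
  have hV_int := integrableOn_rpow_mul hV.integrableOn_tailInt (sub_nonneg.2 hy)
  have hW_int := (integrableOn_rpow_mul hW.integrableOn_tailInt (sub_nonneg.2 hy)).const_mul x
  rw [hV.momentW_eq_mul_momentW_tailInt hy, hW.momentW_eq_mul_momentW_tailInt hy, mul_left_comm,
    ← mul_add, momentW, momentW, momentW, ← integral_const_mul, ← integral_add hV_int hW_int]
  congr 1
  refine setIntegral_congr_fun measurableSet_Ioo fun t ht => ?_
  have h := (hω.discWeight.tailInt_powWeight_add ⟨ht.1.le, ht.2⟩ hint).2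
  rw [powWeight_one_powWeight_sub_one ht.2, powWeight, ← h]
  ring

theorem isTheta_of_bergmanComparable {p : ℝ} (hp : 0 < p)
    (h : BergmanComparable p x ω (x - 1) (tailInt ω)) :
    tailInt (powWeight x ω) =Θ[𝓟 (Ico 0 1)] tailInt (powWeight (x - 1) (tailInt ω)) := by
  have hV := discWeight_powWeight_of_tailInt hω hint
  have hW := discWeight_powWeight_tailInt hω hint
  obtain ⟨C, hC, h⟩ := h
  have hC0 : 0 < C := zero_lt_one.trans_le hC
  have hmon (n : ℕ) := h (fun z => z ^ n) (by fun_prop)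
  simp only [Apq_pow_eq hp hV, Apq_pow_eq hp hW, one_div, inv_mul_le_iff₀ hC0,
    mul_left_comm C, mul_le_mul_iff_right₀ two_pi_pos] at hmon
  have hreg (n : ℕ) :
      (p * n + 1) * momentW (powWeight 1 (powWeight (x - 1) (tailInt ω))) (p * n) ≤
        (C + |x|) * momentW (powWeight (x - 1) (tailInt ω)) (p * n + 1) := by
    have hid := momentW_powWeight_add hω hint (y := p * n + 1)
      (le_add_of_nonneg_left (by positivity))
    rw [add_sub_cancel_right] at hid
    rw [← hid, add_mul]
    gcongr
    · exact (hmon n).1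
    · exact hW.momentW_nonneg _
    · exact le_abs_self x
  have hA : 0 < C + |x| := by positivity
  exact ⟨hV.isBigO_tailInt_of_momentW_le hW hp hA hC0 hreg fun n => (hmon n).1,
    hV.isBigO_tailInt_of_le_momentW hW hp hA hC0 hreg (fun n => (hmon n).1) fun n => (hmon n).2⟩

theorem bergmanComparable_iff_isTheta {p : ℝ} (hp : 0 < p) :
    BergmanComparable p x ω (x - 1) (tailInt ω) ↔
      tailInt (powWeight x ω) =Θ[𝓟 (Ico 0 1)] tailInt (powWeight (x - 1) (tailInt ω)) :=
  ⟨isTheta_of_bergmanComparable hω hint hp,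
    bergmanComparable_of_isTheta hp (discWeight_powWeight_of_tailInt hω hint)
      (discWeight_powWeight_tailInt hω hint)⟩

theorem tailInt_powWeight_isBigO_iff :
    tailInt (powWeight x ω) =O[𝓟 (Ico 0 1)] tailInt (powWeight (x - 1) (tailInt ω)) ↔
      powWeight x (tailInt ω) =O[𝓟 (Ico 0 1)] tailInt (powWeight (x - 1) (tailInt ω)) := by
  have hself := isBigO_const_mul_self x (tailInt (powWeight (x - 1) (tailInt ω))) (𝓟 (Ico 0 1))
  rw [← isBigO_congr (tailInt_powWeight_add_eventuallyEq hω hint) .rfl]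
  refine ⟨fun h => h.add hself, fun h => ?_⟩
  simpa only [add_sub_cancel_right] using h.sub hself

theorem tailInt_powWeight_sub_one_isBigO_iff (hx : x ≠ 0) :
    tailInt (powWeight (x - 1) (tailInt ω)) =O[𝓟 (Ico 0 1)] tailInt (powWeight x ω) ↔
      powWeight x (tailInt ω) =O[𝓟 (Ico 0 1)] tailInt (powWeight x ω) := by
  have hself := isBigO_refl (tailInt (powWeight x ω)) (𝓟 (Ico 0 1))
  rw [← isBigO_congr (tailInt_powWeight_add_eventuallyEq hω hint) .rfl]
  refine ⟨fun h => hself.add (h.const_mul_left x), fun h => ?_⟩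
  rw [← isBigO_const_mul_left_iff hx]
  simpa only [add_sub_cancel_left] using h.sub hself

theorem tailInt_powWeight_sub_one_isBigO (hx : x < 0) :
    tailInt (powWeight (x - 1) (tailInt ω)) =O[𝓟 (Ico 0 1)] tailInt (powWeight x ω) := by
  have hV := discWeight_powWeight_of_tailInt hω hint
  have hW := discWeight_powWeight_tailInt hω hint
  rw [isBigO_principal_iff_of_nonneg (fun s hs => hW.tailInt_nonneg hs.1)
    fun s hs => hV.tailInt_nonneg hs.1]
  refine ⟨(-x)⁻¹, inv_pos.2 (neg_pos.2 hx), fun s hs => ?_⟩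
  have h := (hω.discWeight.tailInt_powWeight_add hs hint).2
  have h0 : 0 ≤ tailInt ω s * (1 - s) ^ x :=
    mul_nonneg (hω.discWeight.tailInt_nonneg hs.1) (rpow_nonneg (sub_nonneg.2 hs.2.le) x)
  rw [le_inv_mul_iff₀ (neg_pos.2 hx)]
  linarith

end WeightPair

section Classes

open Asymptotics Filter Topology

theorem midpoint_one_mem_Ico {s : ℝ} (hs : s ∈ Ico 0 1) : (1 + s) / 2 ∈ Ico (0 : ℝ) 1 :=
  ⟨by linarith [hs.1], by linarith [hs.2]⟩

theorem min_one_two_rpow_mul_rpow_le {a b : ℝ} (y : ℝ) (ha : 0 < a) (hab : a ≤ b)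
    (hba : b ≤ 2 * a) :
    min 1 (2 ^ y) * a ^ y ≤ b ^ y := by
  rcases le_total 0 y with hy | hy
  · calc min 1 (2 ^ y) * a ^ y ≤ 1 * a ^ y := by gcongr; exact min_le_left _ _
      _ ≤ b ^ y := by rw [one_mul]; gcongr
  · calc min 1 (2 ^ y) * a ^ y ≤ 2 ^ y * a ^ y := by gcongr; exact min_le_right _ _
      _ = (2 * a) ^ y := (mul_rpow zero_le_two ha.le).symm
      _ ≤ b ^ y := rpow_le_rpow_of_nonpos (ha.trans_le hab) hba hy

theorem DiscWeight.tailInt_sub_tailInt {w : ℝ → ℝ} (hw : DiscWeight w) {a b : ℝ} (ha : 0 ≤ a)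
    (hab : a ≤ b) (hb : b ≤ 1) : tailInt w a - tailInt w b = ∫ t in Ioo a b, w t := by
  have hint {c : ℝ} (hc : 0 ≤ c) (hc1 : c ≤ 1) : IntervalIntegrable w volume c 1 := by
    rw [intervalIntegrable_iff_integrableOn_Ioo_of_le hc1]
    exact hw.integrableOn_Ioo hc
  rw [tailInt_eq_intervalIntegral w (hab.trans hb), tailInt_eq_intervalIntegral w hb,
    ← intervalIntegral.integral_add_adjacent_intervals
      ((hint ha (hab.trans hb)).trans (hint (ha.trans hab) hb).symm) (hint (ha.trans hab) hb),
    add_sub_cancel_right, intervalIntegral.integral_of_le hab, integral_Ioc_eq_integral_Ioo]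

theorem DiscWeight.powWeight_tailInt_nonneg {w : ℝ → ℝ} (hw : DiscWeight w) {x s : ℝ}
    (hs : s ∈ Ico 0 1) : 0 ≤ powWeight x (tailInt w) s :=
  mul_nonneg (hw.tailInt_nonneg hs.1) (rpow_nonneg (sub_nonneg.2 hs.2.le) x)

theorem dhat_iff_isBigO {w : ℝ → ℝ} (hw : DiscWeight w) :
    Dhat w ↔ tailInt w =O[𝓟 (Ico 0 1)] fun s => tailInt w ((1 + s) / 2) := by
  rw [isBigO_principal_iff_of_nonneg (fun s hs => hw.tailInt_nonneg hs.1)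
    fun s hs => hw.tailInt_nonneg (midpoint_one_mem_Ico hs).1]
  constructor
  · rintro ⟨C, hC, h⟩
    exact ⟨C, zero_lt_one.trans hC, h⟩
  · rintro ⟨C, -, h⟩
    exact ⟨max C 2, one_lt_two.trans_le (le_max_right _ _), fun s hs => (h s hs).trans <|
      mul_le_mul_of_nonneg_right (le_max_left _ _)
        (hw.tailInt_nonneg (midpoint_one_mem_Ico hs).1)⟩

theorem DiscWeight.mul_momentW_powWeight_one_le {w : ℝ → ℝ} (hw : DiscWeight w) {C y : ℝ}
    (hy : 1 ≤ y) (h : ∀ s ∈ Ico 0 1, powWeight 1 w s ≤ C * tailInt w s) :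
    y * momentW (powWeight 1 w) (y - 1) ≤ C * momentW w y := by
  have hy0 : 0 ≤ y - 1 := sub_nonneg.2 hy
  rw [hw.momentW_eq_mul_momentW_tailInt hy, mul_left_comm, momentW, momentW,
    ← integral_const_mul C]
  gcongr y * ?_
  refine setIntegral_mono_on
    (integrableOn_rpow_mul (integrableOn_powWeight hw.integrableOn zero_le_one) hy0)
    ((integrableOn_rpow_mul hw.integrableOn_tailInt hy0).const_mul C) measurableSet_Ioo
    fun t ht => ?_
  rw [mul_left_comm]
  exact mul_le_mul_of_nonneg_left (h t ⟨ht.1.le, ht.2⟩) (rpow_nonneg ht.1.le _)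

theorem dhat_of_powWeight_one_isBigO {w : ℝ → ℝ} (hw : DiscWeight w)
    (h : powWeight 1 w =O[𝓟 (Ico 0 1)] tailInt w) : Dhat w := by
  obtain ⟨C, -, h⟩ := (isBigO_principal_iff_of_nonneg (fun s hs => mul_nonneg (hw.nonneg s hs)
    (rpow_nonneg (sub_nonneg.2 hs.2.le) 1)) fun s hs => hw.tailInt_nonneg hs.1).1 h
  set A := max C 1
  replace h (s : ℝ) (hs : s ∈ Ico 0 1) := (h s hs).trans <|
    mul_le_mul_of_nonneg_right (show C ≤ A from le_max_left _ _) (hw.tailInt_nonneg hs.1)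
  rw [dhat_iff_isBigO hw]
  refine isBigO_of_le_on_half (B := tailInt w 0) (C := exp (2 * (4 * A)) * 2)
    (fun s hs => hw.tailInt_nonneg hs.1) (fun s hs => hw.tail_pos _ (midpoint_one_mem_Ico hs))
    (fun s hs t ht hst => hw.antitoneOn_tailInt (midpoint_one_mem_Ico hs).1
      (midpoint_one_mem_Ico ht).1 (by linarith))
    (fun s hs => hw.antitoneOn_tailInt self_mem_Ici hs.1 hs.1) fun s hs => ?_
  have hd : 0 < 1 - s := sub_pos.2 hs.2
  have hy : 1 ≤ 4 * A / (1 - s) := by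
    rw [one_le_div hd]
    linarith [le_max_right C 1, hs.1]
  have hyd : 4 * A / (1 - s) * (1 - s) = 4 * A := div_mul_cancel₀ _ hd.ne'
  calc tailInt w s ≤ exp (2 * (4 * A)) * momentW w (4 * A / (1 - s)) :=
        hw.tailInt_le_exp_mul_momentW hs (zero_le_one.trans hy) hyd.le
    _ ≤ exp (2 * (4 * A)) * (2 * tailInt w ((1 + s) / 2)) := by
        gcongr
        exact hw.momentW_le_two_mul_tailInt
          (midpoint_one_mem_Ico ⟨one_half_pos.le.trans hs.1, hs.2⟩) hy
          (hw.mul_momentW_powWeight_one_le hy h) (by linarith)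
    _ = _ := (mul_assoc _ _ _).symm

theorem powWeight_isBigO_powWeight_iff {u u' : ℝ → ℝ} {x : ℝ} :
    powWeight x u =O[𝓟 (Ico 0 1)] powWeight x u' ↔ u =O[𝓟 (Ico 0 1)] u' := by
  have hcancel (u : ℝ → ℝ) : (fun s => powWeight x u s * (1 - s) ^ (-x)) =ᶠ[𝓟 (Ico 0 1)] u :=
    eventually_principal.2 fun s hs => by
      simp only [powWeight]
      rw [mul_assoc, ← rpow_add (sub_pos.2 hs.2), add_neg_cancel, rpow_zero, mul_one]
  exact ⟨fun h => (h.mul (isBigO_refl _ _)).congr' (hcancel u) (hcancel u'),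
    fun h => h.mul (isBigO_refl _ _)⟩

theorem powWeight_isBigO_comp_midpoint_iff_dhat {w : ℝ → ℝ} (hw : DiscWeight w) (x : ℝ) :
    powWeight x (tailInt w) =O[𝓟 (Ico 0 1)] (fun s => powWeight x (tailInt w) ((1 + s) / 2)) ↔
      Dhat w := by
  have hmid : (fun s => powWeight x (tailInt w) ((1 + s) / 2)) =ᶠ[𝓟 (Ico 0 1)]
      fun s => (2 ^ x)⁻¹ * powWeight x (fun s => tailInt w ((1 + s) / 2)) s :=
    eventually_principal.2 fun s hs => by
      simp only [powWeight]
      rw [show 1 - (1 + s) / 2 = (1 - s) / 2 by ring,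
        div_rpow (sub_nonneg.2 hs.2.le) zero_le_two]
      ring
  rw [isBigO_congr .rfl hmid, isBigO_const_mul_right_iff (by positivity),
    powWeight_isBigO_powWeight_iff, dhat_iff_isBigO hw]

variable {ω : ℝ → ℝ} {x : ℝ} (hω : IsRadialWeight ω)
  (hint : IntegrableOn (powWeight (x - 1) (tailInt ω)) (Ioo 0 1))
include hω hint

theorem min_mul_powWeight_le_tailInt {s : ℝ} (hs : s ∈ Ico 0 1) :
    min 1 (2 ^ (x - 1)) * powWeight x (tailInt ω) ((1 + s) / 2) ≤
      tailInt (powWeight (x - 1) (tailInt ω)) s := by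
  have hW := discWeight_powWeight_tailInt hω hint
  have hm := midpoint_one_mem_Ico hs
  set m := (1 + s) / 2
  have hsm : s ≤ m := by simp only [m]; linarith [hs.2]
  have hd : 0 < 1 - m := sub_pos.2 hm.2
  have : 0 ≤ tailInt ω m := hω.discWeight.tailInt_nonneg hm.1
  calc min 1 (2 ^ (x - 1)) * powWeight x (tailInt ω) m
      = ∫ t in Ioo s m, tailInt ω m * (min 1 (2 ^ (x - 1)) * (1 - m) ^ (x - 1)) := by
        rw [setIntegral_const, Real.volume_real_Ioo_of_le hsm, powWeight, smul_eq_mul,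
          show m - s = 1 - m by simp only [m]; ring]
        conv_lhs => rw [← sub_add_cancel x 1, rpow_add_one hd.ne', add_sub_cancel_right]
        ring
    _ ≤ ∫ t in Ioo s m, powWeight (x - 1) (tailInt ω) t := by
        refine setIntegral_mono_on (integrableOn_const (by simp))
          ((hW.integrableOn_Ioo hs.1).mono_set (Ioo_subset_Ioo_right hm.2.le)) measurableSet_Ioo
          fun t ht => mul_le_mul ?_ ?_ (by positivity) ?_
        · exact hω.discWeight.antitoneOn_tailInt (hs.1.trans ht.1.le) hm.1 ht.2.le
        · exact min_one_two_rpow_mul_rpow_le _ hd (by linarith [ht.2])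
            (by have := ht.1; simp only [m]; linarith)
        · exact hω.discWeight.tailInt_nonneg (hs.1.trans ht.1.le)
    _ = tailInt (powWeight (x - 1) (tailInt ω)) s - tailInt (powWeight (x - 1) (tailInt ω)) m :=
        (hW.tailInt_sub_tailInt hs.1 hsm hm.2.le).symm
    _ ≤ _ := sub_le_self _ (hW.tailInt_nonneg hm.1)

theorem powWeight_isBigO_iff_dhat :
    powWeight x (tailInt ω) =O[𝓟 (Ico 0 1)] tailInt (powWeight (x - 1) (tailInt ω)) ↔
      Dhat (powWeight (x - 1) (tailInt ω)) := by
  have hV := discWeight_powWeight_of_tailInt hω hint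
  have hW := discWeight_powWeight_tailInt hω hint
  refine ⟨fun h => dhat_of_powWeight_one_isBigO hW <| h.congr'
    (eventually_principal.2 fun s hs => (powWeight_one_powWeight_sub_one hs.2).symm) .rfl, ?_⟩
  rintro ⟨C, -, h⟩
  have hc : 0 < min 1 ((2 : ℝ) ^ (x - 1)) := by positivity
  refine isBigO_of_le_on_half (C := (min 1 (2 ^ (x - 1)))⁻¹ * C)
    (B := tailInt (powWeight x ω) 0 + |x| * tailInt (powWeight (x - 1) (tailInt ω)) 0)
    (fun s hs => hω.discWeight.powWeight_tailInt_nonneg hs) hW.tail_pos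
    (hW.antitoneOn_tailInt.mono Ico_subset_Ici_self) (fun s hs => ?_) fun s hs => ?_
  · have hs' : s ∈ Ico 0 1 := ⟨hs.1, hs.2.trans one_half_lt_one⟩
    rw [powWeight, ← (hω.discWeight.tailInt_powWeight_add hs' hint).2]
    gcongr
    · exact hV.antitoneOn_tailInt self_mem_Ici hs.1 hs.1
    · exact hW.tailInt_nonneg hs.1
    · exact le_abs_self x
    · exact hW.antitoneOn_tailInt self_mem_Ici hs.1 hs.1
  · have hr : 2 * s - 1 ∈ Ico (0 : ℝ) 1 := ⟨by linarith [hs.1], by linarith [hs.2]⟩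
    have hmid : (1 + (2 * s - 1)) / 2 = s := by ring
    have hlow := min_mul_powWeight_le_tailInt hω hint hr
    have hdouble := h _ hr
    rw [hmid] at hlow hdouble
    rw [mul_assoc, le_inv_mul_iff₀ hc]
    exact hlow.trans hdouble

theorem powWeight_isBigO_iff_dhat_of_pos (hx : 0 < x) :
    powWeight x (tailInt ω) =O[𝓟 (Ico 0 1)] tailInt (powWeight (x - 1) (tailInt ω)) ↔
      Dhat ω := by
  have hV := discWeight_powWeight_of_tailInt hω hint
  have hW := discWeight_powWeight_tailInt hω hint
  rw [← powWeight_isBigO_comp_midpoint_iff_dhat hω.discWeight x]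
  constructor
  · intro h
    have hW_mid := (dhat_iff_isBigO hW).1 ((powWeight_isBigO_iff_dhat hω hint).1 h)
    refine h.trans (hW_mid.trans ?_)
    refine (isBigO_principal_iff_of_nonneg
      (fun s hs => hW.tailInt_nonneg (midpoint_one_mem_Ico hs).1)
      fun s hs => hω.discWeight.powWeight_tailInt_nonneg (midpoint_one_mem_Ico hs)).2
      ⟨x⁻¹, inv_pos.2 hx, fun s hs => ?_⟩
    have hid := (hω.discWeight.tailInt_powWeight_add (midpoint_one_mem_Ico hs) hint).2
    rw [le_inv_mul_iff₀ hx, powWeight, ← hid]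
    exact le_add_of_nonneg_left (hV.tailInt_nonneg (midpoint_one_mem_Ico hs).1)
  · refine fun h => h.trans ((isBigO_principal_iff_of_nonneg
      (fun s hs => hω.discWeight.powWeight_tailInt_nonneg (midpoint_one_mem_Ico hs))
      fun s hs => hW.tailInt_nonneg hs.1).2
      ⟨(min 1 (2 ^ (x - 1)))⁻¹, by positivity, fun s hs => ?_⟩)
    rw [le_inv_mul_iff₀ (by positivity)]
    exact min_mul_powWeight_le_tailInt hω hint hs

end Classes

section Dcheck

open Asymptotics Filter Topology

theorem one_sub_div_mem_Ico {K s : ℝ} (hK : 1 < K) (hs : s < 1) : 1 - (1 - s) / K ∈ Ico s 1 := by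
  have hd : 0 < 1 - s := sub_pos.2 hs
  have := div_le_self hd.le hK.le
  have : 0 < (1 - s) / K := div_pos hd (zero_lt_one.trans hK)
  constructor <;> linarith

theorem DiscWeight.tailInt_powWeight_sub_mem_Icc {w : ℝ → ℝ} (hw : DiscWeight w) {x a b : ℝ}
    (hx : 0 ≤ x) (ha : 0 ≤ a) (hab : a ≤ b) (hb : b ≤ 1) :
    tailInt (powWeight x w) a - tailInt (powWeight x w) b ∈
      Icc ((tailInt w a - tailInt w b) * (1 - b) ^ x)
        ((tailInt w a - tailInt w b) * (1 - a) ^ x) := by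
  have hV := discWeight_powWeight hw (integrableOn_powWeight hw.integrableOn hx)
  have hV_int := (hV.integrableOn_Ioo ha).mono_set (Ioo_subset_Ioo_right hb)
  have hw_int := (hw.integrableOn_Ioo ha).mono_set (Ioo_subset_Ioo_right hb)
  have hwt (t : ℝ) (ht : t ∈ Ioo a b) := hw.nonneg t ⟨ha.trans ht.1.le, ht.2.trans_le hb⟩
  rw [hV.tailInt_sub_tailInt ha hab hb, hw.tailInt_sub_tailInt ha hab hb, ← integral_mul_const,
    ← integral_mul_const]
  exact ⟨setIntegral_mono_on (hw_int.mul_const _) hV_int measurableSet_Ioo fun t ht =>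
      mul_le_mul_of_nonneg_left
        (rpow_le_rpow (sub_nonneg.2 hb) (sub_le_sub_left ht.2.le 1) hx) (hwt t ht),
    setIntegral_mono_on hV_int (hw_int.mul_const _) measurableSet_Ioo fun t ht =>
      mul_le_mul_of_nonneg_left
        (rpow_le_rpow (sub_nonneg.2 (ht.2.le.trans hb)) (sub_le_sub_left ht.1.le 1) hx) (hwt t ht)⟩

theorem dcheck_of_powWeight_isBigO {w : ℝ → ℝ} {x : ℝ} (hw : DiscWeight w) (hx : 0 < x)
    (h : powWeight x (tailInt w) =O[𝓟 (Ico 0 1)] tailInt (powWeight x w)) : Dcheck w := by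
  have hV := discWeight_powWeight hw (integrableOn_powWeight hw.integrableOn hx.le)
  obtain ⟨B, hB, h⟩ := (isBigO_principal_iff_of_nonneg
    (fun s hs => hw.powWeight_tailInt_nonneg hs) fun s hs => hV.tailInt_nonneg hs.1).1 h
  obtain ⟨K, hKB, hK⟩ : ∃ K, B * K ^ (-x) ≤ 1 / 2 ∧ 1 < K := by
    have hlim := (tendsto_rpow_neg_atTop hx).const_mul B
    rw [mul_zero] at hlim
    exact ((hlim.eventually_le_const one_half_pos).and (eventually_gt_atTop 1)).exists
  refine ⟨K, hK, 1 + (2 * B)⁻¹, lt_add_of_pos_right 1 (by positivity), fun s hs => ?_⟩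
  have hb := one_sub_div_mem_Ico hK hs.2
  have hbd : 1 - (1 - (1 - s) / K) = (1 - s) / K := sub_sub_cancel _ _
  set b := 1 - (1 - s) / K
  have hd : 0 < 1 - s := sub_pos.2 hs.2
  have hb_nonneg := hw.tailInt_nonneg (hs.1.trans hb.1)
  have hnear := (hw.tailInt_powWeight_sub_mem_Icc hx.le hs.1 hb.1 hb.2.le).2
  have hfar := (hw.tailInt_powWeight_sub_mem_Icc hx.le (hs.1.trans hb.1) hb.2.le le_rfl).2
  have hend (u : ℝ → ℝ) : tailInt u 1 = 0 := by simp [tailInt]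
  rw [hend, hend, sub_zero, sub_zero, hbd, div_rpow hd.le (by linarith), div_eq_inv_mul,
    ← rpow_neg (by linarith)] at hfar
  have hscaled : tailInt w s * (1 - s) ^ x ≤
      (B * (tailInt w s - tailInt w b) + tailInt w b * (B * K ^ (-x))) * (1 - s) ^ x :=
    calc tailInt w s * (1 - s) ^ x ≤ B * tailInt (powWeight x w) s := h s hs
      _ ≤ B * ((tailInt w s - tailInt w b) * (1 - s) ^ x +
          tailInt w b * (K ^ (-x) * (1 - s) ^ x)) := by
        gcongr
        linarith
      _ = _ := by ring
  have hgap : tailInt w b ≤ 2 * B * (tailInt w s - tailInt w b) := by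
    have := mul_le_mul_of_nonneg_left hKB hb_nonneg
    have := le_of_mul_le_mul_right hscaled (rpow_pos_of_pos hd x)
    have := hw.antitoneOn_tailInt hs.1 (hs.1.trans hb.1) hb.1
    linarith
  rw [one_add_mul]
  linarith [(inv_mul_le_iff₀ (by positivity)).2 hgap]

theorem powWeight_isBigO_of_dcheck {w : ℝ → ℝ} {x : ℝ} (hw : DiscWeight w) (hx : 0 ≤ x)
    (h : Dcheck w) : powWeight x (tailInt w) =O[𝓟 (Ico 0 1)] tailInt (powWeight x w) := by
  have hV := discWeight_powWeight hw (integrableOn_powWeight hw.integrableOn hx)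
  obtain ⟨K, hK, C, hC, h⟩ := h
  have hK0 : 0 < K := zero_lt_one.trans hK
  have hC0 : 0 < C := zero_lt_one.trans hC
  have hC1 : 0 < 1 - C⁻¹ := sub_pos.2 (inv_lt_one_of_one_lt₀ hC)
  refine (isBigO_principal_iff_of_nonneg (fun s hs => hw.powWeight_tailInt_nonneg hs)
    fun s hs => hV.tailInt_nonneg hs.1).2 ⟨(1 - C⁻¹)⁻¹ * K ^ x, by positivity, fun s hs => ?_⟩
  have hb := one_sub_div_mem_Ico hK hs.2
  have hlow := (hw.tailInt_powWeight_sub_mem_Icc hx hs.1 hb.1 hb.2.le).1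
  have hgap : (1 - C⁻¹) * tailInt w s ≤ tailInt w s - tailInt w (1 - (1 - s) / K) := by
    have := (le_inv_mul_iff₀ hC0).2 (h s hs)
    linarith
  rw [sub_sub_cancel, div_rpow (sub_nonneg.2 hs.2.le) hK0.le] at hlow
  rw [mul_assoc, le_inv_mul_iff₀ hC1, ← div_le_iff₀' (rpow_pos_of_pos hK0 x), powWeight]
  calc (1 - C⁻¹) * (tailInt w s * (1 - s) ^ x) / K ^ x
      = (1 - C⁻¹) * tailInt w s * ((1 - s) ^ x / K ^ x) := by ring
    _ ≤ (tailInt w s - tailInt w (1 - (1 - s) / K)) * ((1 - s) ^ x / K ^ x) :=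
        mul_le_mul_of_nonneg_right hgap
          (div_nonneg (rpow_nonneg (sub_nonneg.2 hs.2.le) x) (rpow_nonneg hK0.le x))
    _ ≤ tailInt (powWeight x w) s - tailInt (powWeight x w) (1 - (1 - s) / K) := hlow
    _ ≤ _ := sub_le_self _ (hV.tailInt_nonneg (hs.1.trans hb.1))

theorem dcheck_iff_powWeight_isBigO {w : ℝ → ℝ} {x : ℝ} (hw : DiscWeight w) (hx : 0 < x) :
    Dcheck w ↔ powWeight x (tailInt w) =O[𝓟 (Ico 0 1)] tailInt (powWeight x w) :=
  ⟨powWeight_isBigO_of_dcheck hw hx.le, dcheck_of_powWeight_isBigO hw hx⟩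

theorem setIntegral_Ioo_one_sub_inv {a b : ℝ} (hab : a ≤ b) (hb : b < 1) :
    ∫ t in Ioo a b, (1 - t)⁻¹ = log ((1 - a) / (1 - b)) := by
  have hpos {t : ℝ} (ht : t ≤ b) : 0 < 1 - t := sub_pos.2 (ht.trans_lt hb)
  rw [setIntegral_Ioo_eq_sub_of_hasDerivAt_of_nonneg (P := fun t => -log (1 - t)) hab,
    log_div (hpos hab).ne' (hpos le_rfl).ne']
  · ring
  · exact ((continuousOn_const.sub continuousOn_id).log fun t ht => (hpos ht.2).ne').neg
  · intro t ht
    convert! (((hasDerivAt_id t).const_sub 1).log (hpos ht.2.le).ne').neg using 1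
    simp [neg_div]
  · exact fun t ht => (inv_pos.2 (hpos ht.2.le)).le

theorem tailInt_powWeight_neg_one_sub_mem_Icc {ω : ℝ → ℝ} (hω : DiscWeight ω)
    (hW : DiscWeight (powWeight (-1) (tailInt ω))) {a b : ℝ} (ha : 0 ≤ a) (hab : a ≤ b)
    (hb : b < 1) :
    tailInt (powWeight (-1) (tailInt ω)) a - tailInt (powWeight (-1) (tailInt ω)) b ∈
      Icc (tailInt ω b * log ((1 - a) / (1 - b))) (tailInt ω a * log ((1 - a) / (1 - b))) := by
  have hpow : powWeight (-1) (tailInt ω) = fun t => tailInt ω t * (1 - t)⁻¹ :=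
    funext fun t => by rw [powWeight, rpow_neg_one]
  have hinv : IntegrableOn (fun t : ℝ => (1 - t)⁻¹) (Ioo a b) :=
    ((continuousOn_const.sub continuousOn_id).inv₀ fun t ht =>
      (sub_pos.2 (ht.2.trans_lt hb)).ne').integrableOn_Icc.mono_set Ioo_subset_Icc_self
  have hW_int := (hW.integrableOn_Ioo ha).mono_set (Ioo_subset_Ioo_right hb.le)
  have hpos {t : ℝ} (ht : t ∈ Ioo a b) : 0 ≤ (1 - t)⁻¹ := inv_nonneg.2 (by linarith [ht.2])
  rw [hW.tailInt_sub_tailInt ha hab hb.le, ← setIntegral_Ioo_one_sub_inv hab hb,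
    ← integral_const_mul, ← integral_const_mul]
  rw [hpow] at hW_int ⊢
  exact ⟨setIntegral_mono_on (hinv.const_mul _) hW_int measurableSet_Ioo fun t ht =>
      mul_le_mul_of_nonneg_right
        (hω.antitoneOn_tailInt (ha.trans ht.1.le) (ha.trans hab) ht.2.le) (hpos ht),
    setIntegral_mono_on hW_int (hinv.const_mul _) measurableSet_Ioo fun t ht =>
      mul_le_mul_of_nonneg_right
        (hω.antitoneOn_tailInt ha (ha.trans ht.1.le) ht.1.le) (hpos ht)⟩

theorem tailInt_powWeight_neg_one_isBigO_iff_dcheck {ω : ℝ → ℝ} (hω : DiscWeight ω)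
    (hW : DiscWeight (powWeight (-1) (tailInt ω))) :
    tailInt (powWeight (-1) (tailInt ω)) =O[𝓟 (Ico 0 1)] tailInt ω ↔
      Dcheck (powWeight (-1) (tailInt ω)) := by
  rw [isBigO_principal_iff_of_nonneg (fun s hs => hW.tailInt_nonneg hs.1)
    fun s hs => hω.tailInt_nonneg hs.1]
  have hgap {K s : ℝ} (hK : 1 < K) (hs : s ∈ Ico 0 1) := by
    have hb := one_sub_div_mem_Ico hK hs.2
    have h := tailInt_powWeight_neg_one_sub_mem_Icc hω hW hs.1 hb.1 hb.2
    rwa [sub_sub_cancel, div_div_cancel₀ (sub_pos.2 hs.2).ne'] at h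
  constructor
  · rintro ⟨C, hC, h⟩
    refine ⟨exp C, one_lt_exp_iff.2 hC, 2, one_lt_two, fun s hs => ?_⟩
    have hb := one_sub_div_mem_Ico (one_lt_exp_iff.2 hC) hs.2
    have hlow := (hgap (one_lt_exp_iff.2 hC) hs).1
    rw [log_exp] at hlow
    linarith [h _ ⟨hs.1.trans hb.1, hb.2⟩]
  · rintro ⟨K, hK, C, hC, h⟩
    have hC1 : 0 < 1 - C⁻¹ := sub_pos.2 (inv_lt_one_of_one_lt₀ hC)
    refine ⟨(1 - C⁻¹)⁻¹ * log K, mul_pos (inv_pos.2 hC1) (log_pos hK), fun s hs => ?_⟩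
    have hup := (hgap hK hs).2
    have := (le_inv_mul_iff₀ (zero_lt_one.trans hC)).2 (h s hs)
    rw [mul_assoc, le_inv_mul_iff₀ hC1]
    linarith

end Dcheck

section Cases

variable {p x : ℝ} {ω : ℝ → ℝ} (hp : 0 < p) (hω : IsRadialWeight ω)
  (hint : IntegrableOn (powWeight (x - 1) (tailInt ω)) (Ioo 0 1))
include hp hω hint

theorem bergmanComparable_iff_dhat_of_neg (hx : x < 0) :
    BergmanComparable p x ω (x - 1) (tailInt ω) ↔ Dhat (powWeight (x - 1) (tailInt ω)) := by
  rw [bergmanComparable_iff_isTheta hω hint hp, ← powWeight_isBigO_iff_dhat hω hint,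
    ← tailInt_powWeight_isBigO_iff hω hint]
  exact and_iff_left (tailInt_powWeight_sub_one_isBigO hω hint hx)

theorem bergmanComparable_iff_dclass_of_pos (hx : 0 < x) :
    BergmanComparable p x ω (x - 1) (tailInt ω) ↔ Dclass ω := by
  rw [bergmanComparable_iff_isTheta hω hint hp, Dclass,
    ← powWeight_isBigO_iff_dhat_of_pos hω hint hx, ← tailInt_powWeight_isBigO_iff hω hint,
    dcheck_iff_powWeight_isBigO hω.discWeight hx,
    ← tailInt_powWeight_sub_one_isBigO_iff hω hint hx.ne']
  rfl

end Cases

theorem bergmanComparable_zero_iff_dclass {p : ℝ} {ω : ℝ → ℝ} (hp : 0 < p)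
    (hω : IsRadialWeight ω) (hint : IntegrableOn (powWeight (0 - 1) (tailInt ω)) (Ioo 0 1)) :
    BergmanComparable p 0 ω (0 - 1) (tailInt ω) ↔ Dclass (powWeight (0 - 1) (tailInt ω)) := by
  have hzero : powWeight 0 ω = ω := funext fun t => by rw [powWeight, rpow_zero, mul_one]
  have hW := discWeight_powWeight_tailInt hω hint
  rw [bergmanComparable_iff_isTheta hω hint hp, Dclass, ← powWeight_isBigO_iff_dhat hω hint,
    ← tailInt_powWeight_isBigO_iff hω hint, hzero]
  rw [zero_sub] at hW ⊢
  rw [← tailInt_powWeight_neg_one_isBigO_iff_dcheck hω.discWeight hW]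
  rfl

theorem statement1_general (p q : ℝ) (hp : 0 < p) (ω : ℝ → ℝ) (hω : IsRadialWeight ω)
    (hint : IntegrableOn (powWeight (q - 2) (tailInt ω)) (Ioo 0 1)) :
    (q < 1 → (BergmanComparable p (q - 1) ω (q - 2) (tailInt ω) ↔
      Dhat (powWeight (q - 2) (tailInt ω)))) ∧
    (q = 1 → (BergmanComparable p (q - 1) ω (q - 2) (tailInt ω) ↔
      Dclass (powWeight (q - 2) (tailInt ω)))) ∧
    (1 < q → (BergmanComparable p (q - 1) ω (q - 2) (tailInt ω) ↔ Dclass ω)) := by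
  obtain ⟨x, rfl⟩ : ∃ x, q = x + 1 := ⟨q - 1, (sub_add_cancel q 1).symm⟩
  rw [show x + 1 - 2 = x - 1 by ring] at hint ⊢
  rw [add_sub_cancel_right]
  refine ⟨fun hx => bergmanComparable_iff_dhat_of_neg hp hω hint (by linarith), fun hx => ?_,
    fun hx => bergmanComparable_iff_dclass_of_pos hp hω hint (by linarith)⟩
  obtain rfl : x = 0 := by linarith
  exact bergmanComparable_zero_iff_dclass hp hω hint

/-- Theorem 2: two-sided comparability of the two Bergman norms. -/
theorem statement1 (p q : ℝ) (hp : 0 < p) (hq : 0 < q)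
    (ω : ℝ → ℝ) (hω : IsRadialWeight ω)
    (hInt : IntegrableOn (fun t => tailInt ω t * (1 - t) ^ (q - 2)) (Ioo (0:ℝ) 1)) :
    ((q < 1 →
      ((∃ C : ℝ, 1 ≤ C ∧ ∀ f : ℂ → ℂ, DifferentiableOn ℂ f (ball (0:ℂ) 1) →
          (1 / C) * Apq p (q - 1) ω f ≤ Apq p (q - 2) (tailInt ω) f ∧
          Apq p (q - 2) (tailInt ω) f ≤ C * Apq p (q - 1) ω f) ↔
        Dhat (fun t => tailInt ω t * (1 - t) ^ (q - 2)))) ∧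
     (q = 1 →
      ((∃ C : ℝ, 1 ≤ C ∧ ∀ f : ℂ → ℂ, DifferentiableOn ℂ f (ball (0:ℂ) 1) →
          (1 / C) * Apq p (q - 1) ω f ≤ Apq p (q - 2) (tailInt ω) f ∧
          Apq p (q - 2) (tailInt ω) f ≤ C * Apq p (q - 1) ω f) ↔
        Dclass (fun t => tailInt ω t * (1 - t) ^ (q - 2)))) ∧
     (1 < q →
      ((∃ C : ℝ, 1 ≤ C ∧ ∀ f : ℂ → ℂ, DifferentiableOn ℂ f (ball (0:ℂ) 1) →
          (1 / C) * Apq p (q - 1) ω f ≤ Apq p (q - 2) (tailInt ω) f ∧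
          Apq p (q - 2) (tailInt ω) f ≤ C * Apq p (q - 1) ω f) ↔
        Dclass ω))) := by
  exact statement1_general p q hp ω hω hInt
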